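/- arXiv:1303.4007 — 3 statements merged into one kernel-verified Lean document; each statement's English description precedes it below -/
import Mathlib

section
/- Let K be a number field, B ⊆ K an order, S ⊆ B a multiplicative submonoid with 0 ∉ S, and R = BS⁻¹ the localization of B at S. Assume the group of units Rˣ is infinite. Then for every n ≥ 1, every group homomorphism π : SL₂(R) → U(n) into the group of n×n complex unitary matrices has kernel of finite index in SL₂(R); that is, every finite-dimensional unitary representation of SL₂(R) factors through a finite quotient. -/
/-!
Let `F` be the fraction field of `R`, and let `π` be an `n`-dimensional unitary representation of
`SL₂(R)`. An infinite unit group contains a unit `t` of infinite order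
(`exists_unit_infinite_order`). Conjugation by `diag(t, t⁻¹)` multiplies the entry of a unipotent
matrix by `t²`, but on the image of the unipotent group under `π` it can only permute the finitely
many joint eigencharacters; hence a power of it acts trivially there (`exists_iterate_eq`), and `ker π`
contains the elementary matrices of some level `Y`. The same holds after conjugation by any
`k ∈ SL₂(F)`, at a level depending on `k` (`exists_up_conj_mem`).

The elementary matrices of level `Y` need not generate a subgroup of finite index, so the remaining
task is to control `π` on the congruence subgroup `Γ(Y²)`. A matrix `M` with corner `a` commutes,
modulo elementary matrices of level `Y`, with `diag(s, s⁻¹)` as soon as `a` divides `s² - 1`. By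
Dirichlet's theorem the corner can be made a prime number `p` in a suitable residue class
(`exists_prime_dvd`), and the classes can be chosen such that the exponents of `(R / p²R)ˣ` are bounded
at any given prime `l`, uniformly in the level (`exists_uniform_bound`). Comparing all `l` yields one
exponent `m` such that `diag(t, t⁻¹) ^ m` commutes with `Γ(Y²)` modulo every normal subgroup
containing the elementary matrices of level `Y` (`exists_uniform_commute`). As `m` is independent of
`Y`, this can be used for all conjugates `k diag(t, t⁻¹) ^ m k⁻¹`, `k ∈ SL₂(F)`, at once. These generate
a normal subgroup, so every `g ∈ SL₂(F)` satisfies `π(gMg⁻¹) = π(M)` for `M` in a deep enough congruence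
subgroup (`mem_virtStab`). Applied to `g ∈ SL₂(R)` and combined with strong approximation
(`mem_of_elementary`), this shows that `π(Γ(Y²))` is central in the image of `π` (`exists_central`).

The transfer then makes a power of `π` into a homomorphism `φ` to a commutative group which kills the
elementary matrices. It only depends on the first row `(a, b)`, as a Mennicke symbol does, and the
invariance under `diag(s, s⁻¹) ∈ SL₂(F)`, `s ∈ ℕ`, allows `b` to be multiplied by `s²` up to controlled
torsion (`phi_delta`). Together with the reduction to rows `(p, β)`, where `p ≡ 1` modulo `4` is prime,
this bounds the exponent of the image of `φ` (`phi_exponent`). So `π(Γ(Y²))` is a commutative group of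
unitary matrices of bounded exponent, which is finite (`ker_finiteIndex`).
-/

/-! ### Rings with finite quotients, and rows with a prime corner -/

namespace SL2U
open Polynomial

theorem isUnit_mk_iff {R : Type*} [CommRing R] (x y : R) :
    IsUnit (Ideal.Quotient.mk (Ideal.span {x}) y) ↔ IsCoprime x y := by
  constructor
  · intro h
    obtain ⟨z, hz⟩ := h.exists_right_inv
    obtain ⟨z, rfl⟩ := Ideal.Quotient.mk_surjective z
    rw [← map_mul, ← map_one (Ideal.Quotient.mk _), Ideal.Quotient.mk_eq_mk_iff_sub_mem,
      Ideal.mem_span_singleton] at hz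
    obtain ⟨k, hk⟩ := hz
    exact ⟨-k, z, by linear_combination hk⟩
  · rintro ⟨k, z, hz⟩
    refine IsUnit.of_mul_eq_one (Ideal.Quotient.mk _ z) ?_
    rw [← map_mul, ← map_one (Ideal.Quotient.mk _), Ideal.Quotient.mk_eq_mk_iff_sub_mem,
      Ideal.mem_span_singleton]
    exact ⟨-k, by linear_combination hz⟩

theorem isUnit_pow_eq_one {Q : Type*} [CommRing Q] [Finite Q] {x : Q} (h : IsUnit x) :
    ∃ j : ℕ, x ^ (j + 1) = 1 := by
  obtain ⟨u, rfl⟩ := h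
  obtain ⟨j, hj, h⟩ := (isOfFinOrder_of_finite u).exists_pow_eq_one
  refine ⟨j - 1, ?_⟩
  rw [Nat.sub_add_cancel hj, ← Units.val_pow_eq_pow_val, h, Units.val_one]

/-- A finite quotient ring `R / nR` has stable range one. The witness `x = 1 - b ^ j`, with `j` such
that `bⁱ = bⁱ⁺ʲ` modulo `n` for some `i`, vanishes modulo the maximal ideals not containing `b` and
is `1` modulo the others. -/
theorem exists_coprime_add_mul {R : Type*} [CommRing R] (n : R)
    [Finite (R ⧸ Ideal.span {n})] {a b : R} (hab : IsCoprime a b) :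
    ∃ x, IsCoprime (b + a * x) n := by
  set φ := Ideal.Quotient.mk (Ideal.span {n})
  obtain ⟨i, k, hik, h⟩ := Finite.exists_ne_map_eq_of_infinite (fun i : ℕ => φ b ^ i)
  wlog hlt : i < k generalizing i k
  · exact this k i hik.symm h.symm (by omega)
  obtain ⟨d, rfl⟩ := Nat.exists_eq_add_of_lt hlt
  refine ⟨1 - b ^ (d + 1), ?_⟩
  rw [isCoprime_comm, ← isUnit_mk_iff]
  by_contra hnu
  obtain ⟨m, hm, hmem⟩ := exists_max_ideal_of_mem_nonunits hnu
  have hp := hm.isPrime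
  have hmem' : φ b + φ a * (1 - φ b ^ (d + 1)) ∈ m := by simpa using hmem
  obtain ⟨r, s, hrs⟩ := hab
  have h1 : φ r * φ a + φ s * φ b = 1 := by rw [← map_mul, ← map_mul, ← map_add, hrs, map_one]
  have hz : φ b ^ i * (1 - φ b ^ (d + 1)) = 0 := by
    have : φ b ^ i = φ b ^ (i + d + 1) := h
    rw [mul_sub, ← pow_add, mul_one, sub_eq_zero, ← add_assoc]
    exact this
  by_cases hb : φ b ∈ m
  · have hA : φ a * (1 - φ b ^ (d + 1)) ∈ m := (Ideal.add_mem_iff_right m hb).1 hmem'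
    have hA2 : φ a ∈ m := by
      have : φ a = φ a * (1 - φ b ^ (d + 1)) + φ a * φ b ^ d * φ b := by ring
      rw [this]
      exact m.add_mem hA (m.mul_mem_left _ hb)
    apply hp.ne_top
    rw [Ideal.eq_top_iff_one, ← h1]
    exact m.add_mem (m.mul_mem_left _ hA2) (m.mul_mem_left _ hb)
  · have h0 : φ b ^ i * (1 - φ b ^ (d + 1)) ∈ m := by rw [hz]; exact m.zero_mem
    rcases hp.mem_or_mem h0 with h2 | h2
    · exact hb (hp.mem_of_pow_mem _ h2)
    · exact hb ((Ideal.add_mem_iff_left m (m.mul_mem_left _ h2)).1 hmem')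

/-- The arithmetic properties of a localized order `R` on which the argument rests.

* `finite_quot`: the quotients `R / nR`, `n ≥ 1`, are finite.
* `dvd_nat`: every nonzero element of `R` divides a positive integer.
* `alg`: up to a denominator `D`, the element `w` is an integer polynomial in some `x + nkw`; this
  is the theorem of the primitive element.
* `exponents`: `G p` is an exponent of the unit group of `R / p²R` for every prime `p`, and for every
  prime `l` there is a reduced residue class `c` modulo `Q`, contained in `1 + 4ℤ`, such that the
  `l`-part of `G p` is bounded by that of the fixed integer `E` for all primes `p` in this class. -/
structure IsArith (R : Type*) [CommRing R] : Prop where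
  finite_quot : ∀ n : ℕ, 1 ≤ n → Finite (R ⧸ Ideal.span {(n : R)})
  dvd_nat : ∀ r : R, r ≠ 0 → ∃ n : ℕ, 1 ≤ n ∧ r ∣ (n : R)
  alg : ∀ (x w : R) (n : ℕ), 1 ≤ n → ∃ (k : ℤ) (D : ℕ) (f : ℤ[X]), 1 ≤ D ∧
    (D : R) * w = aeval (x + n * k * w) f
  exponents : ∃ (E : ℕ) (G : ℕ → ℕ), 1 ≤ E ∧ (∀ p, p.Prime → 1 ≤ G p) ∧
    (∀ p : ℕ, p.Prime → ∀ x : R, IsCoprime x (p : R) → (p : R) ^ 2 ∣ x ^ G p - 1) ∧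
    ∀ l : ℕ, l.Prime → ∃ Q c : ℕ, 1 ≤ Q ∧ 4 ∣ Q ∧ c ≡ 1 [MOD 4] ∧ c.Coprime Q ∧
      ∀ p : ℕ, p.Prime → p ≡ c [MOD Q] → padicValNat l (G p) ≤ padicValNat l E

theorem IsArith.finite_quot' {R : Type*} [CommRing R] (hR : IsArith R) {r : R} (hr : r ≠ 0) :
    Finite (R ⧸ Ideal.span {r}) := by
  obtain ⟨n, hn, h⟩ := hR.dvd_nat r hr
  have := hR.finite_quot n hn
  have hle : Ideal.span {(n : R)} ≤ Ideal.span {r} := Ideal.span_singleton_le_span_singleton.2 h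
  exact Finite.of_surjective _ (Ideal.Quotient.factor_surjective hle)

theorem isCoprime_natCast_of_primes {R : Type*} [CommRing R] (α : R) (D : ℕ) (hD : D ≠ 0)
    (h : ∀ q : ℕ, q.Prime → q ∣ D → IsCoprime α (q : R)) : IsCoprime α (D : R) := by
  induction D using induction_on_primes with
  | zero => exact absurd rfl hD
  | one => simpa using isCoprime_one_right
  | prime_mul p a hp ih =>
    push_cast
    refine IsCoprime.mul_right (h p hp (dvd_mul_right _ _)) (ih ?_ ?_)
    · rintro rfl; simp at hD
    · intro q hq hqa
      exact h q hq (hqa.mul_left _)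

/-- An integer which is a unit in a finite ring of characteristic `c` is prime to `c`. The finiteness
makes its inverse an integer as well. -/
theorem isCoprime_of_isUnit_charP {Q : Type*} [CommRing Q] [Finite Q] (c : ℕ) [CharP Q c]
    (z : ℤ) (hz : IsUnit (z : Q)) : IsCoprime z (c : ℤ) := by
  obtain ⟨j, hj⟩ := isUnit_pow_eq_one hz
  have : ((z ^ (j + 1) - 1 : ℤ) : Q) = 0 := by push_cast; rw [hj, sub_self]
  rw [CharP.intCast_eq_zero_iff Q c] at this
  obtain ⟨k, hk⟩ := this
  exact ⟨z ^ j, -k, by linear_combination hk⟩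

/-- Every unimodular row `(a, b)` can be moved by two elementary column operations, via `(a, β)`, to
a row `(p, β)` with `p` a prime number in a prescribed residue class.

If `β ≡ b` modulo `a` is such that `a` is congruent to an integer `l` modulo `β`, then `p` can be
chosen by Dirichlet's theorem in the class of `l` modulo the characteristic of `R / βR`. To construct
such a `β`, take `b' ≡ b` modulo `a` with `D a = f(b')` for some integer polynomial `f`. The element
`β = (1 - u) b' + u`, with `u` an integer divisible by `a` such that `1 - u` is divisible by those prime
factors of `D` to which `b'` is not already known to be coprime, is coprime to `D` and to `1 - u`; so
`b'`, and hence `a = f(b') / D`, is congruent to an integer modulo `β`. -/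
theorem exists_prime_dvd {R : Type*} [CommRing R] [CharZero R] (hR : IsArith R) {a b : R}
    (hab : IsCoprime a b) (n : ℕ) (hn : 1 ≤ n) (c0 : ℕ) (hc : c0.Coprime n) (N : ℕ) :
    ∃ (β : R) (p : ℕ), a ∣ β - b ∧ IsCoprime β (n : R) ∧ p.Prime ∧ N < p ∧ p ≡ c0 [MOD n] ∧
      β ∣ (p : R) - a := by
  by_cases ha : a = 0
  · subst ha
    have hb : IsUnit b := isCoprime_zero_left.1 hab
    obtain ⟨p, hp, hpp, hpc⟩ := Nat.forall_exists_prime_gt_and_modEq N (by omega) hc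
    obtain ⟨z, hz⟩ := hb.exists_right_inv
    exact ⟨b, p, by simp, ⟨z, 0, by linear_combination hz⟩, hpp, hp, hpc, hb.dvd⟩
  obtain ⟨Na, hNa, haN⟩ := hR.dvd_nat a ha
  set n0 := n * Na with hn0
  have hn0p : 1 ≤ n0 := Nat.mul_pos hn hNa
  have := hR.finite_quot n0 hn0p
  obtain ⟨x, hx⟩ := exists_coprime_add_mul (n0 : R) hab
  obtain ⟨k, D, f, hD, hf⟩ := hR.alg (b + a * x) a n0 hn0p
  set b' := b + a * x + n0 * k * a with hb'
  have hb'n : IsCoprime b' (n0 : R) := by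
    have := IsCoprime.add_mul_left_left hx (k * a)
    rwa [← mul_assoc] at this
  have haD : a ∣ b' - b := ⟨x + n0 * k, by rw [hb']; ring⟩
  have han0 : a ∣ (n0 : R) := by rw [hn0]; push_cast; exact haN.mul_left _
  -- `D2` collects the primes dividing `D` but not `n0`
  set D2 := ∏ q ∈ D.primeFactors.filter (fun q => ¬ q ∣ n0), q with hD2
  have hD2c : Nat.Coprime n0 D2 := by
    rw [hD2]
    refine Nat.Coprime.prod_right ?_
    intro q hq
    rw [Finset.mem_filter] at hq
    exact (((Nat.prime_of_mem_primeFactors hq.1).coprime_iff_not_dvd).2 hq.2).symm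
  obtain ⟨w0, y0, hw0⟩ := Nat.isCoprime_iff_coprime.2 hD2c
  -- the two candidates `w0` and `w0 + D2` cannot both give `α = 0`
  obtain ⟨w, ⟨y, hwy⟩, hα0⟩ : ∃ w : ℤ, (∃ y : ℤ, w * n0 + y * D2 = 1) ∧
      (1 - (n0 * w : R)) * b' + n0 * w ≠ 0 := by
    by_contra hcon
    push Not at hcon
    have h1 := hcon w0 ⟨y0, hw0⟩
    have h2 := hcon (w0 + D2) ⟨y0 - n0, by linear_combination hw0⟩
    push_cast at h1 h2
    have h3 : (n0 : R) * D2 = 0 := by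
      linear_combination ((n0 : R) * D2) * h1 + (1 - (n0 : R) * w0) * (h2 - h1)
    have h4 : n0 * D2 = 0 := by exact_mod_cast h3
    have h5 : D2 ≠ 0 := by
      rw [hD2, Finset.prod_ne_zero_iff]
      intro q hq
      exact (Nat.prime_of_mem_primeFactors (Finset.mem_filter.1 hq).1).ne_zero
    exact Nat.mul_ne_zero (by omega) h5 h4
  set u : R := n0 * w with hu
  set v : R := 1 - u with hv
  set α := v * b' + u with hα
  have hαb : α - b' = n0 * (w * (1 - b')) := by rw [hα, hv, hu]; ring
  have hαn0 : IsCoprime α (n0 : R) := by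
    have : α = b' + n0 * (w * (1 - b')) := by linear_combination hαb
    rw [this]
    exact IsCoprime.add_mul_left_left hb'n _
  have hαD : IsCoprime α (D : R) := by
    refine isCoprime_natCast_of_primes α D (by omega) ?_
    intro q hq hqD
    by_cases hqn : q ∣ n0
    · obtain ⟨r, hr⟩ := hqn
      rw [hr] at hαn0
      push_cast at hαn0
      exact hαn0.of_mul_right_left
    · have hqD2 : q ∣ D2 := Finset.dvd_prod_of_mem (fun q => q) (Finset.mem_filter.2
        ⟨Nat.mem_primeFactors.2 ⟨hq, hqD, by omega⟩, hqn⟩)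
      obtain ⟨r, hr⟩ := hqD2
      have h1 : v = y * (q * r) := by
        have := congrArg (Int.cast : ℤ → R) hwy
        push_cast [hr] at this
        rw [hv, hu]; linear_combination -this
      have : α = 1 + q * (y * r * (b' - 1)) := by
        rw [hα]; linear_combination (b' - 1) * h1
      rw [this]
      exact IsCoprime.add_mul_left_left isCoprime_one_left _
  have hαv : IsCoprime α v := ⟨1, 1 - b', by rw [hα, hv]; ring⟩
  have haα : a ∣ α - b := by
    have : α - b = (α - b') + (b' - b) := by ring
    rw [this, hαb]
    exact dvd_add (han0.mul_right _) haD
  have hαa : IsCoprime α a := by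
    obtain ⟨r, hr⟩ := haα
    have : α = b + a * r := by linear_combination hr
    rw [this]
    exact IsCoprime.add_mul_left_left hab.symm _
  have hαn : IsCoprime α (n : R) := by
    rw [hn0] at hαn0
    push_cast at hαn0
    exact hαn0.of_mul_right_left
  have hfin := hR.finite_quot' hα0
  set φ := Ideal.Quotient.mk (Ideal.span {α}) with hφ
  obtain ⟨j, hj⟩ := isUnit_pow_eq_one ((isUnit_mk_iff α v).2 hαv)
  obtain ⟨i, hi⟩ := isUnit_pow_eq_one ((isUnit_mk_iff α (D : R)).2 hαD)
  have hφα : φ α = 0 := (Ideal.Quotient.eq_zero_iff_dvd _ _).2 dvd_rfl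
  -- modulo `α` one has `b' = -u / v`, and `v` has the integral inverse `v ^ j`
  set l1 : ℤ := -(n0 * w) * (1 - n0 * w) ^ j with hl1
  have hbl : φ b' = (l1 : R ⧸ Ideal.span {α}) := by
    have h1 : φ v * φ b' = - φ u := by
      rw [← map_mul, eq_neg_iff_add_eq_zero, ← map_add]; exact hφα
    have h2 : φ b' = φ (-u * v ^ j) := by
      rw [map_mul, map_neg, ← h1, map_pow]
      linear_combination (-φ b') * hj
    rw [h2, hl1, hv, hu]
    simp
  set l : ℤ := (D : ℤ) ^ i * f.eval l1 with hl
  have hal : φ a = (l : R ⧸ Ideal.span {α}) := by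
    have h1 : φ D * φ a = ((f.eval l1 : ℤ) : R ⧸ Ideal.span {α}) := by
      rw [← map_mul, hf]
      have : φ (aeval b' f) = aeval (φ b') f := by
        simp only [aeval_def, hom_eval₂]
        congr 1
      rw [this, hbl]
      simp [aeval_def]
    rw [hl]
    push_cast
    rw [← h1]
    have h2 : φ D = (D : R ⧸ Ideal.span {α}) := by simp
    rw [h2] at hi ⊢
    linear_combination (-φ a) * hi
  obtain ⟨c, hcc⟩ := CharP.exists (R ⧸ Ideal.span {α})
  have hlc : IsCoprime l (c : ℤ) := isCoprime_of_isUnit_charP c l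
    (by rw [← hal]; exact (isUnit_mk_iff α a).2 hαa)
  have hnc : IsCoprime (n : ℤ) (c : ℤ) := isCoprime_of_isUnit_charP (Q := R ⧸ Ideal.span {α}) c n
    (by
      have := (isUnit_mk_iff α (n : R)).2 hαn
      simpa using this)
  have hc0 : c ≠ 0 := CharP.char_ne_zero_of_finite (R ⧸ Ideal.span {α}) c
  set l' : ℕ := (l % c).toNat with hl'
  have hl'e : (l' : ℤ) = l % c := Int.toNat_of_nonneg (Int.emod_nonneg _ (by exact_mod_cast hc0))
  have hl'c : Nat.Coprime l' c := by
    rw [← Nat.isCoprime_iff_coprime, hl'e, Int.emod_def]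
    have := IsCoprime.add_mul_left_left hlc (-(l / c))
    rwa [mul_neg, ← sub_eq_add_neg] at this
  have hl'φ : ((l' : ℕ) : R ⧸ Ideal.span {α}) = φ a := by
    rw [hal, ← Int.cast_natCast, hl'e, CharP.intCast_eq_intCast _ c]
    exact Int.mod_modEq _ _
  obtain ⟨r, hr1, hr2⟩ := Nat.chineseRemainder (Nat.isCoprime_iff_coprime.1 hnc) c0 l'
  have hrc : Nat.Coprime r (n * c) := by
    refine Nat.Coprime.mul_right ?_ ?_
    · rw [Nat.Coprime, hr1.gcd_eq]; exact hc
    · rw [Nat.Coprime, hr2.gcd_eq]; exact hl'c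
  obtain ⟨p, hpN, hpp, hpr⟩ := Nat.forall_exists_prime_gt_and_modEq N
    (Nat.mul_ne_zero (by omega) hc0) hrc
  refine ⟨α, p, haα, hαn, hpp, hpN, ?_, ?_⟩
  · exact (hpr.of_mul_right c).trans hr1
  · have h1 : p ≡ l' [MOD c] := (hpr.of_mul_left n).trans hr2
    have h2 : ((p : ℕ) : R ⧸ Ideal.span {α}) = l' := (CharP.natCast_eq_natCast _ c).2 h1
    rw [← Ideal.Quotient.eq_zero_iff_dvd, map_sub, sub_eq_zero, ← hφ, ← hl'φ, ← h2]
    simp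
end SL2U

/-! ### Uniform bounds for the exponents of unit groups -/

namespace SL2U
open Polynomial

/-- The `l`-adic valuation of `P(p)` is locally constant in `p` away from the zeros of `P`. -/
theorem padicValNat_eval_le {P : ℤ[X]} {l v c p : ℕ} (hl : l.Prime)
    (hc : ¬ (l : ℤ) ^ (v + 1) ∣ P.eval (c : ℤ)) (hp : p ≡ c [MOD l ^ (v + 1)]) :
    padicValNat l (P.eval (p : ℤ)).natAbs ≤ v := by
  have := Fact.mk hl
  by_contra hcon
  have h1 : l ^ (v + 1) ∣ (P.eval (p : ℤ)).natAbs :=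
    (padicValNat_dvd_iff (v + 1) _).2 (Or.inr (by omega))
  have h2 : ((l ^ (v + 1) : ℕ) : ℤ) ∣ P.eval (p : ℤ) := Int.natCast_dvd.2 h1
  have h3 : ((l ^ (v + 1) : ℕ) : ℤ) ∣ (p : ℤ) - c := (Nat.modEq_iff_dvd.1 hp.symm)
  have h4 := h3.trans (sub_dvd_eval_sub (p : ℤ) c P)
  apply hc
  have h5 := (dvd_sub_right h2).1 h4
  exact_mod_cast h5

/-- For a monic integer polynomial divisible by `X`, the `l`-adic valuations of its values at
suitable primes are bounded, for every `l`, by those of one fixed integer `E`. For `l` larger than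
the degree, the reduction of `P` modulo `l` has a nonzero value, so that the valuation vanishes on a
residue class modulo `l`; for the finitely many small `l` the class of `4l + 1` modulo a power of `l`
is used. -/
theorem exists_uniform_bound (P : ℤ[X]) (hm : P.Monic) (hX : X ∣ P)
    (hpos : ∀ p : ℕ, 2 ≤ p → P.eval (p : ℤ) ≠ 0) :
    ∃ E : ℕ, 1 ≤ E ∧ ∀ l : ℕ, l.Prime → ∃ Q c : ℕ, 1 ≤ Q ∧ 4 ∣ Q ∧ c ≡ 1 [MOD 4] ∧ c.Coprime Q ∧
      ∀ p : ℕ, p.Prime → p ≡ c [MOD Q] →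
        padicValNat l (P.eval (p : ℤ)).natAbs ≤ padicValNat l E := by
  set D := P.natDegree
  set g : ℕ → ℕ := fun l => (P.eval ((4 * l + 1 : ℕ) : ℤ)).natAbs with hg
  have hg0 : ∀ l, 1 ≤ l → g l ≠ 0 := fun l hl => by
    rw [hg]; exact Int.natAbs_ne_zero.2 (hpos _ (by omega))
  set E := ∏ l ∈ Finset.Icc 1 (D + 2), g l with hE
  have hE0 : E ≠ 0 := Finset.prod_ne_zero_iff.2 fun l hl => hg0 l (Finset.mem_Icc.1 hl).1
  refine ⟨E, Nat.one_le_iff_ne_zero.2 hE0, fun l hl => ?_⟩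
  have := Fact.mk hl
  by_cases hlD : l ≤ D + 2
  · set v := padicValNat l (g l) with hv
    have hvE : v ≤ padicValNat l E := by
      refine (padicValNat_dvd_iff_le hE0).1 (pow_padicValNat_dvd.trans ?_)
      exact Finset.dvd_prod_of_mem g (Finset.mem_Icc.2 ⟨hl.one_le, hlD⟩)
    refine ⟨4 * l ^ (v + 1), 4 * l + 1, Nat.mul_pos (by norm_num) (pow_pos hl.pos _),
      dvd_mul_right _ _, ?_, ?_, ?_⟩
    · simp [Nat.ModEq, Nat.add_mod]
    · refine Nat.Coprime.mul_right ?_ (Nat.Coprime.pow_right _ ?_)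
      · simp
      · simp
    · intro p _ hpc
      refine le_trans (padicValNat_eval_le hl ?_ (hpc.of_mul_left _)) hvE
      intro h
      have h2 : l ^ (v + 1) ∣ g l := by
        rw [hg]; exact Int.natCast_dvd.1 (by exact_mod_cast h)
      have := (padicValNat_dvd_iff_le (hg0 l hl.one_le)).1 h2
      omega
  · push Not at hlD
    obtain ⟨z, hz⟩ : ∃ z : ZMod l, (P.map (Int.castRingHom (ZMod l))).eval z ≠ 0 := by
      by_contra hcon
      push Not at hcon
      have hmm := hm.map (Int.castRingHom (ZMod l))
      have h1 := Polynomial.card_le_degree_of_subset_roots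
        (p := P.map (Int.castRingHom (ZMod l))) (Z := Finset.univ) (fun z _ => by
          rw [Polynomial.mem_roots hmm.ne_zero]; exact hcon z)
      rw [hm.natDegree_map, Finset.card_univ, ZMod.card] at h1
      omega
    have hz0 : z ≠ 0 := by
      rintro rfl
      obtain ⟨P', rfl⟩ := hX
      simp at hz
    have h4l : Nat.Coprime 4 l := by
      have : Nat.Coprime 2 l := (Nat.coprime_primes Nat.prime_two hl).2 (by omega)
      exact Nat.Coprime.pow_left 2 this
    obtain ⟨c, hc1, hc2⟩ := Nat.chineseRemainder h4l 1 z.val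
    have hcz : (c : ZMod l) = z := by
      rw [(ZMod.natCast_eq_natCast_iff _ _ _).2 hc2, ZMod.natCast_zmod_val]
    refine ⟨4 * l, c, Nat.mul_pos (by norm_num) hl.pos, dvd_mul_right _ _, hc1, ?_, ?_⟩
    · refine Nat.Coprime.mul_right ?_ ?_
      · rw [Nat.Coprime, hc1.gcd_eq]; norm_num
      · rw [Nat.coprime_comm, hl.coprime_iff_not_dvd, ← ZMod.natCast_eq_zero_iff, hcz]
        exact hz0
    · intro p _ hpc
      refine le_trans (padicValNat_eval_le (v := 0) (c := c) hl ?_ ?_) (Nat.zero_le _)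
      · intro h
        apply hz
        rw [zero_add, pow_one, ← ZMod.intCast_zmod_eq_zero_iff_dvd] at h
        rw [← hcz, ← h]
        simp [Polynomial.eval_map]
      · simpa using hpc.of_mul_left 4

/-- The polynomial `X ∏_{k ≤ d} |GL_k(𝔽_X)|`. Its value at a prime `p` is an exponent of the unit
group of `R / p²R` if `R / pR` is generated by `d` elements as an abelian group. -/
noncomputable def expPoly (d : ℕ) : ℤ[X] :=
  X * ∏ k ∈ Finset.range (d + 1), ∏ i : Fin k, (X ^ k - X ^ (i : ℕ))

theorem expPoly_monic (d : ℕ) : (expPoly d).Monic := by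
  refine monic_X.mul (monic_prod_of_monic _ _ fun k _ => monic_prod_of_monic _ _ fun i _ => ?_)
  exact monic_X_pow_sub (by simp)

theorem expPoly_eval (d p : ℕ) (hp : 1 ≤ p) : (expPoly d).eval (p : ℤ) =
    ((p * ∏ k ∈ Finset.range (d + 1), ∏ i : Fin k, (p ^ k - p ^ (i : ℕ)) : ℕ) : ℤ) := by
  have : ∀ (k : ℕ) (i : Fin k), ((p ^ k - p ^ (i : ℕ) : ℕ) : ℤ) = (p : ℤ) ^ k - (p : ℤ) ^ (i : ℕ) :=
    fun k i => by
      rw [Nat.cast_sub (Nat.pow_le_pow_right hp i.2.le)]; push_cast; rfl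
  simp [expPoly, eval_prod, this]

/-- The unit group of a `k`-dimensional algebra over `𝔽_p` embeds into `GL_k(𝔽_p)` by its regular
representation, hence its exponent divides the order of that group. -/
theorem unit_pow_eq_one {p : ℕ} [Fact p.Prime] {A : Type*} [CommRing A] [Algebra (ZMod p) A]
    [Module.Finite (ZMod p) A] {x : A} (hx : IsUnit x) :
    x ^ (∏ i : Fin (Module.finrank (ZMod p) A),
      (p ^ Module.finrank (ZMod p) A - p ^ (i : ℕ))) = 1 := by
  obtain ⟨u, rfl⟩ := hx
  set b := Module.finBasis (ZMod p) A
  have h := pow_card_eq_one' (x := Units.map (Algebra.leftMulMatrix b).toRingHom.toMonoidHom u)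
  have h2 := Matrix.card_GL_field (𝔽 := ZMod p) (Module.finrank (ZMod p) A)
  rw [ZMod.card] at h2
  rw [Matrix.GeneralLinearGroup] at h2
  rw [h2, ← map_pow] at h
  apply Algebra.leftMulMatrix_injective b
  have h3 := congrArg Units.val h
  simpa using h3

/-- If `R / pR` is generated by `d` elements as an abelian group, then `expPoly d` evaluated at `p`
kills the unit group of `R / p²R`: the factor `∏_k |GL_k(𝔽_p)|` kills the units modulo `p`, and the
remaining factor `p` lifts the congruence to one modulo `p²`. -/
theorem dvd_pow_sub_one {R : Type*} [CommRing R] {d : ℕ} (p : ℕ) (hp : p.Prime)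
    (e : Fin d → R) (he : ∀ r : R, ∃ z : Fin d → ℤ, (p : R) ∣ r - ∑ i, z i * e i)
    (x : R) (hx : IsCoprime x (p : R)) :
    (p : R) ^ 2 ∣ x ^ ((expPoly d).eval (p : ℤ)).natAbs - 1 := by
  have := Fact.mk hp
  rw [expPoly_eval d p hp.one_le, Int.natAbs_natCast, mul_comm, pow_mul]
  set F := ∏ k ∈ Finset.range (d + 1), ∏ i : Fin k, (p ^ k - p ^ (i : ℕ)) with hF
  suffices h : (p : R) ∣ x ^ F - 1 by
    have := dvd_sub_pow_of_dvd_sub h 1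
    simpa using this
  set A := R ⧸ Ideal.span {(p : R)}
  have hpA : (p : A) = 0 := by
    have : Ideal.Quotient.mk (Ideal.span {(p : R)}) (p : R) = 0 :=
      (Ideal.Quotient.eq_zero_iff_dvd _ _).2 dvd_rfl
    simpa using this
  obtain ⟨m, hm⟩ := CharP.exists A
  let : Algebra (ZMod p) A := ZMod.algebra' A m ((CharP.cast_eq_zero_iff A m p).1 hpA)
  classical
  have hspan : Submodule.span (ZMod p)
      (Set.range fun i => Ideal.Quotient.mk (Ideal.span {(p : R)}) (e i)) = ⊤ := by
    rw [eq_top_iff]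
    rintro y -
    obtain ⟨r, rfl⟩ := Ideal.Quotient.mk_surjective y
    obtain ⟨z, hz⟩ := he r
    rw [← Ideal.Quotient.eq_zero_iff_dvd, map_sub, sub_eq_zero] at hz
    rw [hz, map_sum]
    refine Submodule.sum_mem _ fun i _ => ?_
    rw [map_mul, map_intCast, ← zsmul_eq_mul]
    exact zsmul_mem (Submodule.subset_span (Set.mem_range_self i)) _
  have hfin : Module.Finite (ZMod p) A :=
    Module.finite_def.2 (Submodule.fg_def.2 ⟨_, Set.finite_range _, hspan⟩)
  have hle : Module.finrank (ZMod p) A ≤ d := by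
    have h1 := finrank_range_le_card (R := ZMod p)
      (fun i => Ideal.Quotient.mk (Ideal.span {(p : R)}) (e i))
    rw [Set.finrank, hspan, finrank_top] at h1
    simpa using h1
  have hu := unit_pow_eq_one (p := p) ((isUnit_mk_iff (p : R) x).2 hx.symm)
  rw [← Ideal.Quotient.eq_zero_iff_dvd, map_sub, sub_eq_zero, map_one, map_pow]
  obtain ⟨w, hw⟩ := Finset.dvd_prod_of_mem
    (fun k => ∏ i : Fin k, (p ^ k - p ^ (i : ℕ))) (Finset.mem_range.2 (Nat.lt_succ_of_le hle))
  rw [hF, hw, pow_mul, hu, one_pow]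
end SL2U

/-! ### Localizations of orders in number fields -/

namespace SL2U
open Polynomial

/-- The inclusion of `R = BS⁻¹` into the number field `K`. -/
theorem exists_injective_to_field {K : Type*} [Field K] (B : Subalgebra ℤ K)
    (S : Submonoid B) (hS : (0 : B) ∉ S)
    (R : Type*) [CommRing R] [Algebra B R] [IsLocalization S R] :
    ∃ j : R →+* K, Function.Injective j := by
  have hu : ∀ y : S, IsUnit (algebraMap B K y) := by
    rintro ⟨y, hy⟩
    rw [isUnit_iff_ne_zero]
    intro h
    have h0 : y = 0 := Subtype.ext h
    exact hS (h0 ▸ hy)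
  refine ⟨IsLocalization.lift hu, (injective_iff_map_eq_zero _).2 fun r hr => ?_⟩
  obtain ⟨b, s, rfl⟩ := IsLocalization.exists_mk'_eq S r
  rw [IsLocalization.lift_mk'_spec, mul_zero] at hr
  have h0 : b = 0 := Subtype.ext hr
  rw [h0, IsLocalization.mk'_zero]

/-- If `B / nB` is finite, then `B` surjects onto `BS⁻¹ / n`: two distinct powers of a
denominator coincide in the finite ring `B / nB`, so its inverse in `BS⁻¹ / n` is a power of it. -/
theorem exists_sub_dvd {B : Type*} [CommRing B] (S : Submonoid B)
    (R : Type*) [CommRing R] [Algebra B R] [IsLocalization S R] (n : ℕ)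
    (hfin : Finite (B ⧸ Ideal.span {(n : B)})) (r : R) :
    ∃ b : B, (n : R) ∣ r - algebraMap B R b := by
  set φ := (Ideal.Quotient.mk (Ideal.span {(n : R)})).comp (algebraMap B R) with hφ
  obtain ⟨b, s, rfl⟩ := IsLocalization.exists_mk'_eq S r
  obtain ⟨i, k, hik, h⟩ := Finite.exists_ne_map_eq_of_infinite
    (fun i : ℕ => Ideal.Quotient.mk (Ideal.span {(n : B)}) ((s : B) ^ i))
  wlog hlt : i < k generalizing i k
  · exact this k i hik.symm h.symm (by omega)
  obtain ⟨d, rfl⟩ := Nat.exists_eq_add_of_lt hlt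
  have h1 : (n : B) ∣ (s : B) ^ (i + d + 1) - (s : B) ^ i := by
    rw [← Ideal.Quotient.eq_zero_iff_dvd, map_sub, sub_eq_zero]; exact h.symm
  have h2 : (n : R) ∣ algebraMap B R s ^ (i + d + 1) - algebraMap B R s ^ i := by
    have := map_dvd (algebraMap B R) h1
    simpa using this
  have hsu : IsUnit (algebraMap B R s) := IsLocalization.map_units R s
  have h3 : (n : R) ∣ algebraMap B R s ^ (d + 1) - 1 := by
    have : algebraMap B R s ^ (i + d + 1) - algebraMap B R s ^ i =
        algebraMap B R s ^ i * (algebraMap B R s ^ (d + 1) - 1) := by ring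
    rw [this] at h2
    exact ((hsu.pow i).dvd_mul_left).1 h2
  refine ⟨b * s ^ d, ?_⟩
  have hb : algebraMap B R b = IsLocalization.mk' R b s * algebraMap B R s :=
    (IsLocalization.mk'_spec R b s).symm
  rw [map_mul, map_pow, hb]
  have : IsLocalization.mk' R b s - IsLocalization.mk' R b s * algebraMap B R s *
      algebraMap B R s ^ d = -IsLocalization.mk' R b s * (algebraMap B R s ^ (d + 1) - 1) := by ring
  rw [this]
  exact h3.mul_left _

theorem finite_quotient_natCast {B : Type*} [CommRing B] [Module.Finite ℤ B] (n : ℕ) (hn : 1 ≤ n) :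
    Finite (B ⧸ Ideal.span {(n : B)}) := by
  have : Module.Finite ℤ (B ⧸ Ideal.span {(n : B)}) :=
    Module.Finite.of_surjective
      (Ideal.Quotient.mk (Ideal.span {(n : B)})).toAddMonoidHom.toIntLinearMap
      Ideal.Quotient.mk_surjective
  refine Module.finite_of_fg_torsion _ ?_
  intro x
  obtain ⟨x, rfl⟩ := Ideal.Quotient.mk_surjective x
  refine ⟨⟨(n : ℤ), mem_nonZeroDivisors_of_ne_zero (by exact_mod_cast (by omega : n ≠ 0))⟩, ?_⟩
  change (n : ℤ) • (Ideal.Quotient.mk (Ideal.span {(n : B)})) x = _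
  rw [zsmul_eq_mul, ← map_intCast (Ideal.Quotient.mk (Ideal.span {(n : B)})), ← map_mul,
    Ideal.Quotient.eq_zero_iff_dvd]
  simp

/-- The primitive element argument: two of the fields `ℚ(x + nkw)`, `k ∈ ℤ`, coincide, since `K` has
only finitely many subfields, and this common field contains `w`. -/
theorem exists_aeval_eq {K : Type*} [Field K] [NumberField K] (x w : K) (n : ℕ) (hn : 1 ≤ n) :
    ∃ (k : ℤ) (D : ℕ) (f : ℤ[X]), 1 ≤ D ∧ (D : K) * w = aeval (x + n * k * w) f := by
  have : Finite (IntermediateField ℚ K) :=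
    Field.finite_intermediateField_of_exists_primitive_element ℚ K
      (Field.exists_primitive_element ℚ K)
  obtain ⟨i, k, hik, h⟩ := Finite.exists_ne_map_eq_of_infinite
    (fun i : ℤ => IntermediateField.adjoin ℚ {x + n * i * w})
  have hi : x + n * i * w ∈ IntermediateField.adjoin ℚ {x + n * i * w} :=
    IntermediateField.mem_adjoin_simple_self _ _
  have hk : x + n * k * w ∈ IntermediateField.adjoin ℚ {x + n * i * w} := by
    have := IntermediateField.mem_adjoin_simple_self ℚ (x + n * k * w)
    have h' : IntermediateField.adjoin ℚ {x + n * i * w} =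
      IntermediateField.adjoin ℚ {x + n * k * w} := h
    rwa [h']
  have hw : w ∈ IntermediateField.adjoin ℚ {x + n * i * w} := by
    have h1 := sub_mem hi hk
    have hne : ((n * (i - k) : ℤ) : K) ≠ 0 := by
      rw [Int.cast_ne_zero]
      exact mul_ne_zero (by exact_mod_cast (by omega : n ≠ 0)) (sub_ne_zero.2 hik)
    have h2 : w = ((n * (i - k) : ℤ) : K)⁻¹ * (x + n * i * w - (x + n * k * w)) := by
      rw [eq_inv_mul_iff_mul_eq₀ hne]; push_cast; ring
    have h3 := mul_mem (inv_mem (intCast_mem (IntermediateField.adjoin ℚ {x + n * i * w})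
      (n * (i - k)))) h1
    rwa [← h2] at h3
  rw [← IntermediateField.mem_toSubalgebra,
    IntermediateField.adjoin_simple_toSubalgebra_of_isAlgebraic (Algebra.IsAlgebraic.isAlgebraic _),
    Algebra.adjoin_singleton_eq_range_aeval] at hw
  obtain ⟨g, hg⟩ := hw
  obtain ⟨b, hb, hbg⟩ := IsLocalization.integerNormalization_spec (nonZeroDivisors ℤ) g
  set f := IsLocalization.integerNormalization (nonZeroDivisors ℤ) g
  have hb0 : b ≠ 0 := nonZeroDivisors.ne_zero hb
  have h1 : aeval (x + n * i * w) f = (b : K) * w := by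
    have h2 := congrArg (aeval (x + n * i * w)) hbg
    rw [aeval_map_algebraMap] at h2
    rw [h2, map_zsmul, zsmul_eq_mul]
    congr 1
  refine ⟨i, b.natAbs, C (b.sign) * f, Int.natAbs_pos.2 hb0, ?_⟩
  rw [map_mul, h1, aeval_C, ← mul_assoc]
  congr 1
  rw [eq_intCast, ← Int.cast_mul, Int.sign_mul_self_eq_abs, Int.abs_eq_natAbs]
  simp

/-- A localization of an order in a number field has the arithmetic properties of `IsArith`. -/
theorem isArith_of_localization
    (K : Type*) [Field K] [NumberField K]
    (B : Subalgebra ℤ K) (hB : (Subalgebra.toSubmodule B).FG)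
    (S : Submonoid B) (hS : (0 : B) ∉ S)
    (R : Type*) [CommRing R] [IsDomain R] [Algebra B R] [IsLocalization S R] :
    IsArith R := by
  obtain ⟨j, hj⟩ := exists_injective_to_field B S hS R
  have hBf : Module.Finite ℤ B := Module.Finite.of_fg hB
  have hfq := finite_quotient_natCast (B := B)
  refine ⟨fun n hn => ?_, fun r hr => ?_, fun x w n hn => ?_, ?_⟩
  · have := hfq n hn
    have hle : Ideal.span {(n : B)} ≤ (Ideal.span {(n : R)}).comap (algebraMap B R) := by
      rw [Ideal.span_singleton_le_iff_mem, Ideal.mem_comap, map_natCast]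
      exact Ideal.mem_span_singleton_self _
    refine Finite.of_surjective (Ideal.quotientMap _ (algebraMap B R) hle) ?_
    intro y
    obtain ⟨r, rfl⟩ := Ideal.Quotient.mk_surjective y
    obtain ⟨b, hb⟩ := exists_sub_dvd S R n this r
    refine ⟨Ideal.Quotient.mk _ b, ?_⟩
    rw [Ideal.quotientMap_mk, eq_comm, ← sub_eq_zero, ← map_sub, Ideal.Quotient.eq_zero_iff_dvd]
    exact hb
  · obtain ⟨b, s, rfl⟩ := IsLocalization.exists_mk'_eq S r
    have hb0 : b ≠ 0 := by
      rintro rfl; exact hr (IsLocalization.mk'_zero _)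
    have h1 := Ideal.comap_ne_bot_of_integral_mem (R := ℤ) hb0 (Ideal.mem_span_singleton_self b)
      (Algebra.IsIntegral.isIntegral b)
    obtain ⟨m, hm, hm0⟩ := Submodule.exists_mem_ne_zero_of_ne_bot h1
    rw [Ideal.mem_comap, Ideal.mem_span_singleton] at hm
    refine ⟨m.natAbs, Int.natAbs_pos.2 hm0, ?_⟩
    have h2 : algebraMap B R b ∣ (m : R) := by
      have := map_dvd (algebraMap B R) hm
      simpa using this
    have h3 : (m : R) ∣ (m.natAbs : R) := by
      have : m ∣ (m.natAbs : ℤ) := Int.dvd_natAbs_self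
      have := map_dvd (Int.castRingHom R) this
      simpa only [eq_intCast, Int.cast_natCast] using this
    refine Dvd.dvd.trans ⟨algebraMap B R s, ?_⟩ (h2.trans h3)
    exact (IsLocalization.mk'_spec R b s).symm
  · obtain ⟨k, D, f, hD, h⟩ := exists_aeval_eq (j x) (j w) n hn
    refine ⟨k, D, f, hD, hj ?_⟩
    rw [map_mul, map_natCast, h]
    simp only [aeval_def, hom_eval₂]
    congr 1
    · exact RingHom.ext_int _ _
    · simp
  · obtain ⟨d, e, he⟩ := Module.Finite.exists_fin (R := ℤ) (M := B)
    have hpos : ∀ p : ℕ, 2 ≤ p → (expPoly d).eval (p : ℤ) ≠ 0 := by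
      intro p hp
      rw [expPoly_eval d p (by omega)]
      rw [Nat.cast_ne_zero]
      refine mul_ne_zero (by omega) (Finset.prod_ne_zero_iff.2 fun k _ =>
        Finset.prod_ne_zero_iff.2 fun i _ => ?_)
      have := Nat.pow_lt_pow_right (by omega : 1 < p) i.2
      omega
    obtain ⟨E, hE, h⟩ := exists_uniform_bound (expPoly d) (expPoly_monic d) (dvd_mul_right _ _) hpos
    refine ⟨E, fun p => ((expPoly d).eval (p : ℤ)).natAbs, hE,
      fun p hp => Int.natAbs_pos.2 (hpos p hp.two_le), fun p hp x hx => ?_, h⟩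
    refine dvd_pow_sub_one p hp (fun i => algebraMap B R (e i)) (fun r => ?_) x hx
    obtain ⟨b, hb⟩ := exists_sub_dvd S R p (hfq p hp.one_le) r
    have hbm : b ∈ Submodule.span ℤ (Set.range e) := by rw [he]; trivial
    obtain ⟨z, hz⟩ := (Submodule.mem_span_range_iff_exists_fun ℤ).1 hbm
    refine ⟨z, ?_⟩
    rw [← hz] at hb
    simpa using hb

/-- An infinite unit group of a subring of a number field contains an element of infinite order, since
a number field contains only finitely many roots of unity. -/
theorem exists_unit_infinite_order (K : Type*) [Field K] [NumberField K]
    {R : Type*} [CommRing R] (j : R →+* K) (hj : Function.Injective j) (hu : Infinite Rˣ) :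
    ∃ t : Rˣ, ∀ k : ℕ, 1 ≤ k → t ^ k ≠ 1 := by
  by_contra hcon
  push Not at hcon
  have hfin := NumberField.Embeddings.finite_of_norm_le K ℂ 1
  refine hu.not_finite ?_
  have hinj : Function.Injective (fun t : Rˣ => j t) := fun s t h => Units.ext (hj h)
  refine (Set.finite_univ_iff).1 (Set.Finite.of_finite_image (hfin.subset ?_) hinj.injOn)
  rintro _ ⟨t, -, rfl⟩
  obtain ⟨k, hk, h⟩ := hcon t
  have h1 : (j t) ^ k = 1 := by
    rw [← map_pow, ← Units.val_pow_eq_pow_val, h, Units.val_one, map_one]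
  refine ⟨IsIntegral.of_pow hk (by rw [h1]; exact isIntegral_one), fun φ => ?_⟩
  have h2 : ‖φ (j t)‖ ^ k = 1 := by rw [← norm_pow, ← map_pow, h1, map_one, norm_one]
  exact ((pow_eq_one_iff_of_nonneg (norm_nonneg _) (by omega)).1 h2).le

/-- To bound an order `o` by `e`, it suffices to find for each prime `l` some multiple of `o` whose
`l`-part divides `e`. -/
theorem dvd_of_padic {o e : ℕ} (he : e ≠ 0) (h : ∀ l : ℕ, l.Prime → ∃ j : ℕ, j ≠ 0 ∧ o ∣ j ∧
    padicValNat l j ≤ padicValNat l e) : o ∣ e := by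
  have ho : o ≠ 0 := by
    obtain ⟨j, hj, hoj, -⟩ := h 2 Nat.prime_two
    rintro rfl
    exact hj (zero_dvd_iff.1 hoj)
  rw [← Nat.factorization_le_iff_dvd ho he]
  intro l
  by_cases hl : l.Prime
  · obtain ⟨j, hj, hoj, hle⟩ := h l hl
    have := Fact.mk hl
    rw [Nat.factorization_def _ hl, Nat.factorization_def _ hl]
    refine le_trans ?_ hle
    exact (padicValNat_dvd_iff_le hj).1 (pow_padicValNat_dvd.trans hoj)
  · rw [Nat.factorization_eq_zero_of_not_prime _ hl]
    exact Nat.zero_le _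
end SL2U

/-! ### Elementary matrices and strong approximation -/

namespace SL2U
open Matrix

/-- `SL₂(R)`. -/
abbrev SL (R : Type*) [CommRing R] := Matrix.SpecialLinearGroup (Fin 2) R

section basic
variable {R : Type*} [CommRing R]

/-- The matrix with rows `(a, b)` and `(c, d)` as an element of `SL₂(R)`. -/
def mk (a b c d : R) (h : a * d - b * c = 1) : SL R := ⟨!![a, b; c, d], by rw [det_fin_two_of, h]⟩

/-- The upper unipotent matrix with entry `x`. -/
def up (x : R) : SL R := mk 1 x 0 1 (by ring)
/-- The lower unipotent matrix with entry `x`. -/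
def lo (x : R) : SL R := mk 1 0 x 1 (by ring)
/-- The diagonal matrix `diag(t, t⁻¹)`. -/
def tor (t : Rˣ) : SL R := mk t 0 0 (t⁻¹ : Rˣ) (by simp)
/-- The Weyl element, with rows `(0, 1)` and `(-1, 0)`. -/
def wey : SL R := mk 0 1 (-1) 0 (by ring)

theorem ext2 {M N : SL R} (h00 : M 0 0 = N 0 0) (h01 : M 0 1 = N 0 1) (h10 : M 1 0 = N 1 0)
    (h11 : M 1 1 = N 1 1) : M = N := by
  ext i j; fin_cases i <;> fin_cases j <;> assumption

theorem det_eq (M : SL R) : M 0 0 * M 1 1 - M 0 1 * M 1 0 = 1 := by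
  rw [← det_fin_two]; exact M.2

@[simp] theorem mk_00 (a b c d : R) (h) : (mk a b c d h) 0 0 = a := rfl
@[simp] theorem mk_01 (a b c d : R) (h) : (mk a b c d h) 0 1 = b := rfl
@[simp] theorem mk_10 (a b c d : R) (h) : (mk a b c d h) 1 0 = c := rfl
@[simp] theorem mk_11 (a b c d : R) (h) : (mk a b c d h) 1 1 = d := rfl

theorem mul_00 (M N : SL R) : (M * N) 0 0 = M 0 0 * N 0 0 + M 0 1 * N 1 0 := by
  refine (congrFun (congrFun (Matrix.SpecialLinearGroup.coe_mul M N) 0) 0).trans ?_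
  rw [mul_apply, Fin.sum_univ_two]
theorem mul_01 (M N : SL R) : (M * N) 0 1 = M 0 0 * N 0 1 + M 0 1 * N 1 1 := by
  refine (congrFun (congrFun (Matrix.SpecialLinearGroup.coe_mul M N) 0) 1).trans ?_
  rw [mul_apply, Fin.sum_univ_two]
theorem mul_10 (M N : SL R) : (M * N) 1 0 = M 1 0 * N 0 0 + M 1 1 * N 1 0 := by
  refine (congrFun (congrFun (Matrix.SpecialLinearGroup.coe_mul M N) 1) 0).trans ?_
  rw [mul_apply, Fin.sum_univ_two]
theorem mul_11 (M N : SL R) : (M * N) 1 1 = M 1 0 * N 0 1 + M 1 1 * N 1 1 := by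
  refine (congrFun (congrFun (Matrix.SpecialLinearGroup.coe_mul M N) 1) 1).trans ?_
  rw [mul_apply, Fin.sum_univ_two]

@[simp] theorem one_00 : (1 : SL R) 0 0 = 1 := rfl
@[simp] theorem one_01 : (1 : SL R) 0 1 = 0 := rfl
@[simp] theorem one_10 : (1 : SL R) 1 0 = 0 := rfl
@[simp] theorem one_11 : (1 : SL R) 1 1 = 1 := rfl

theorem inv_eq (M : SL R) : M⁻¹ = mk (M 1 1) (-M 0 1) (-M 1 0) (M 0 0)
    (by linear_combination det_eq M) := by
  rw [inv_eq_iff_mul_eq_one]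
  apply ext2 <;> simp only [mul_00, mul_01, mul_10, mul_11, mk_00, mk_01, mk_10, mk_11, one_00,
    one_01, one_10, one_11]
  · linear_combination det_eq M
  · ring
  · ring
  · linear_combination det_eq M

@[simp] theorem inv_00 (M : SL R) : M⁻¹ 0 0 = M 1 1 := by rw [inv_eq]; rfl
@[simp] theorem inv_01 (M : SL R) : M⁻¹ 0 1 = -M 0 1 := by rw [inv_eq]; rfl
@[simp] theorem inv_10 (M : SL R) : M⁻¹ 1 0 = -M 1 0 := by rw [inv_eq]; rfl
@[simp] theorem inv_11 (M : SL R) : M⁻¹ 1 1 = M 0 0 := by rw [inv_eq]; rfl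

theorem up_add (x y : R) : up (x + y) = up x * up y := by
  apply ext2 <;> simp [up, mul_00, mul_01, mul_10, mul_11, add_comm]
theorem lo_add (x y : R) : lo (x + y) = lo x * lo y := by
  apply ext2 <;> simp [lo, mul_00, mul_01, mul_10, mul_11]
@[simp] theorem up_zero : up (0 : R) = 1 := by
  apply ext2 <;> simp [up]
@[simp] theorem lo_zero : lo (0 : R) = 1 := by
  apply ext2 <;> simp [lo]
theorem up_neg (x : R) : up (-x) = (up x)⁻¹ := by
  apply ext2 <;> simp [up]
theorem lo_neg (x : R) : lo (-x) = (lo x)⁻¹ := by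
  apply ext2 <;> simp [lo]
theorem wey_conj_up (x : R) : wey * up x * wey⁻¹ = lo (-x) := by
  apply ext2 <;> simp [up, lo, wey, mul_00, mul_01, mul_10, mul_11]
theorem wey_conj_lo (x : R) : wey * lo x * wey⁻¹ = up (-x) := by
  apply ext2 <;> simp [up, lo, wey, mul_00, mul_01, mul_10, mul_11]
theorem wey_eq : (wey : SL R) = up 1 * lo (-1) * up 1 := by
  apply ext2 <;> simp [up, lo, wey, mul_00, mul_01, mul_10, mul_11]
theorem tor_mul (s t : Rˣ) : tor (s * t) = tor s * tor t := by
  apply ext2 <;> simp [tor, mul_00, mul_01, mul_10, mul_11, mul_comm]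
@[simp] theorem tor_one : tor (1 : Rˣ) = 1 := by
  apply ext2 <;> simp [tor]
theorem tor_pow (t : Rˣ) (k : ℕ) : tor (t ^ k) = tor t ^ k := by
  induction k with
  | zero => simp
  | succ k ih => rw [pow_succ, tor_mul, ih, pow_succ]
theorem tor_inv (t : Rˣ) : tor t⁻¹ = (tor t)⁻¹ := by
  rw [eq_inv_iff_mul_eq_one, ← tor_mul, inv_mul_cancel, tor_one]
theorem tor_conj_up (t : Rˣ) (x : R) : tor t * up x * (tor t)⁻¹ = up ((t : R) ^ 2 * x) := by
  apply ext2 <;> simp [up, tor, mul_00, mul_01, mul_10, mul_11]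
  ring

/-- The homomorphism induced on `SL₂` by a ring homomorphism. -/
abbrev slmap {F : Type*} [CommRing F] (f : R →+* F) : SL R →* SL F :=
  Matrix.SpecialLinearGroup.map f

variable {F : Type*} [CommRing F] (f : R →+* F)
@[simp] theorem slmap_apply (M : SL R) (i j : Fin 2) : slmap f M i j = f (M i j) := rfl
@[simp] theorem slmap_up (x : R) : slmap f (up x) = up (f x) := by
  apply ext2 <;> simp [up]
@[simp] theorem slmap_lo (x : R) : slmap f (lo x) = lo (f x) := by
  apply ext2 <;> simp [lo]
theorem slmap_tor (t : Rˣ) : slmap f (tor t) = tor (Units.map f.toMonoidHom t) := by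
  apply ext2 <;> simp [tor]
theorem slmap_injective (hf : Function.Injective f) : Function.Injective (slmap f) :=
  fun _ _ h => ext2 (hf (congrFun (congrFun (congrArg Subtype.val h) 0) 0))
    (hf (congrFun (congrFun (congrArg Subtype.val h) 0) 1))
    (hf (congrFun (congrFun (congrArg Subtype.val h) 1) 0))
    (hf (congrFun (congrFun (congrArg Subtype.val h) 1) 1))

/-- The principal congruence subgroup `Γ(n)`, the kernel of reduction modulo `n`. -/
def Gam (n : R) : Subgroup (SL R) := (slmap (Ideal.Quotient.mk (Ideal.span {n}))).ker

instance (n : R) : (Gam n).Normal := by unfold Gam; infer_instance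

theorem mem_Gam {n : R} {M : SL R} :
    M ∈ Gam n ↔ n ∣ M 0 0 - 1 ∧ n ∣ M 0 1 ∧ n ∣ M 1 0 ∧ n ∣ M 1 1 - 1 := by
  simp only [← Ideal.Quotient.eq_zero_iff_dvd, map_sub, sub_eq_zero, map_one]
  rw [Gam, MonoidHom.mem_ker]
  constructor
  · intro h
    have := fun i j => congrFun (congrFun (congrArg Subtype.val h) i) j
    exact ⟨this 0 0, this 0 1, this 1 0, this 1 1⟩
  · rintro ⟨h1, h2, h3, h4⟩
    exact ext2 h1 h2 h3 h4

theorem Gam_le {m n : R} (h : n ∣ m) : Gam m ≤ Gam n := by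
  intro M
  simp only [mem_Gam]
  rintro ⟨h1, h2, h3, h4⟩
  exact ⟨h.trans h1, h.trans h2, h.trans h3, h.trans h4⟩

theorem Gam_finiteIndex (n : R) [Finite (R ⧸ Ideal.span {n})] : (Gam n).FiniteIndex := by
  have : Finite (SL (R ⧸ Ideal.span {n})) := Subtype.finite
  unfold Gam
  infer_instance

/-- A diagonal matrix `diag(a, r)` with `r ≡ 1` modulo `y₁y₂` is inverse to a product of elementary
matrices, upper with entries in `y₁R` and lower with entries in `y₂R`. -/
theorem whitehead (a r y1 y2 z : R) (h1 : r * a = 1) (h2 : r = 1 + y1 * y2 * z) :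
    mk a 0 0 r (by linear_combination h1) *
      (up y1 * lo (y2 * z) * up (y1 * -a) * lo (y2 * -(r * z))) = 1 := by
  apply ext2 <;> simp only [mul_00, mul_01, mul_10, mul_11, up, lo, mk_00, mk_01, mk_10, mk_11,
      one_00, one_01, one_10, one_11]
  · linear_combination -a * h2 + h1 - y2 * r * z * ((a ^ 2 * y1) * h2 - a * y1 * h1)
  · linear_combination (a ^ 2 * y1) * h2 - a * y1 * h1
  · linear_combination -y2 * z * r * (-(r - 1) * h1 + r * a * h2)
  · linear_combination -(r - 1) * h1 + r * a * h2

/-- Strong approximation: a subgroup containing the upper and lower elementary matrices with entries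
in `y₁R` and `y₂R` respectively, as well as some `Γ(n)`, contains every matrix of the form
`(1 + y₁y₂*, y₁*; y₂*, *)`. The finite ring `R / ny₁y₂` has stable range one, so that modulo this level
the matrix can be made diagonal by such elementary operations; then `whitehead` applies. -/
theorem mem_of_elementary (hR : IsArith R) (y1 y2 n : ℕ) (hy1 : 1 ≤ y1) (hy2 : 1 ≤ y2) (hn : 1 ≤ n)
    (H : Subgroup (SL R)) (hup : ∀ r : R, up (y1 * r) ∈ H)
    (hlo : ∀ r : R, lo (y2 * r) ∈ H)
    (hG : Gam (n : R) ≤ H) (M : SL R) (h00 : (y1 * y2 : R) ∣ M 0 0 - 1) (h01 : (y1 : R) ∣ M 0 1)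
    (h10 : (y2 : R) ∣ M 1 0) : M ∈ H := by
  set m := n * y1 * y2 with hm
  have hm1 : 1 ≤ m := Nat.mul_pos (Nat.mul_pos hn hy1) hy2
  have hGm : Gam (m : R) ≤ H :=
    le_trans (Gam_le (by rw [hm]; push_cast; exact ⟨y1 * y2, by ring⟩)) hG
  have hfin := hR.finite_quot m hm1
  have hcop : IsCoprime (M 0 1 * y2) (M 0 0) := by
    refine IsCoprime.mul_left ⟨-M 1 0, M 1 1, by linear_combination det_eq M⟩ ?_
    obtain ⟨k, hk⟩ := h00
    exact ⟨-(y1 * k), 1, by linear_combination hk⟩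
  obtain ⟨x, hx⟩ := exists_coprime_add_mul (m : R) hcop
  suffices hM1 : M * lo (y2 * x) ∈ H from (H.mul_mem_cancel_right (hlo x)).1 hM1
  set M1 := M * lo (y2 * x) with hM1
  have e00 : M1 0 0 = M 0 0 + M 0 1 * y2 * x := by rw [hM1, mul_00]; simp [lo]; ring
  have e01 : M1 0 1 = M 0 1 := by rw [hM1, mul_01]; simp [lo]
  have e10 : M1 1 0 = M 1 0 + M 1 1 * (y2 * x) := by rw [hM1, mul_10]; simp [lo]
  rw [← e00] at hx
  obtain ⟨r, s, hrs⟩ := hx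
  obtain ⟨b', hb'⟩ : (y1 : R) ∣ M1 0 1 := by rwa [e01]
  obtain ⟨c', hc'⟩ : (y2 : R) ∣ M1 1 0 := by
    rw [e10]; exact dvd_add h10 ⟨M 1 1 * x, by ring⟩
  obtain ⟨a', ha'⟩ : (y1 * y2 : R) ∣ M1 0 0 - 1 := by
    obtain ⟨k, hk⟩ := h00
    obtain ⟨k', hk'⟩ := h01
    exact ⟨k + k' * x, by rw [e00, hk']; linear_combination hk⟩
  obtain ⟨z, hz⟩ : ∃ z : R, r = 1 + y1 * y2 * z :=
    ⟨-(a' * r) - s * n, by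
      have : (m : R) = n * y1 * y2 := by rw [hm]; push_cast; ring
      rw [this] at hrs
      linear_combination hrs - r * ha'⟩
  set P := lo (-(y2 * (c' * r))) * M1 * up (-(y1 * (b' * r)))
  set W := up (y1 * 1 : R) * lo (y2 * z) * up (y1 * (-M1 0 0)) * lo (y2 * (-(r * z)))
  have hW : W ∈ H := H.mul_mem (H.mul_mem (H.mul_mem (hup _) (hlo _)) (hup _)) (hlo _)
  -- modulo `m`, the matrix `P` is `diag(M1 0 0, r)`
  suffices h : P * W ∈ H by
    have hP : P ∈ H := (H.mul_mem_cancel_right hW).1 h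
    have h1 : lo (-(y2 * (c' * r))) ∈ H := by rw [lo_neg]; exact H.inv_mem (hlo _)
    have h2 : up (-(y1 * (b' * r))) ∈ H := by rw [up_neg]; exact H.inv_mem (hup _)
    exact (H.mul_mem_cancel_left h1).1 ((H.mul_mem_cancel_right h2).1 hP)
  apply hGm
  rw [Gam, MonoidHom.mem_ker]
  set φ := Ideal.Quotient.mk (Ideal.span {(m : R)})
  have hφm : φ (m : R) = 0 := (Ideal.Quotient.eq_zero_iff_dvd _ _).2 dvd_rfl
  have q1 : φ r * φ (M1 0 0) = 1 := by
    have := congrArg φ hrs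
    rwa [map_add, map_mul, map_mul, hφm, mul_zero, add_zero, map_one] at this
  have q2 : φ r = 1 + φ y1 * φ y2 * φ z := by
    have := congrArg φ hz
    simpa only [map_add, map_mul, map_one] using this
  have q3 : φ (M1 0 1) = φ y1 * φ b' := by rw [hb', map_mul]
  have q4 : φ (M1 1 0) = φ y2 * φ c' := by rw [hc', map_mul]
  have q5 : φ (M1 0 0) * φ (M1 1 1) - φ (M1 0 1) * φ (M1 1 0) = 1 := by
    have := congrArg φ (det_eq M1)
    simpa only [map_sub, map_mul, map_one] using this
  have hP : slmap φ P = mk (φ (M1 0 0)) 0 0 (φ r) (by linear_combination q1) := by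
    simp only [P, map_mul, slmap_up, slmap_lo]
    apply ext2 <;> simp only [mul_00, mul_01, mul_10, mul_11, up, lo, mk_00, mk_01, mk_10, mk_11,
      slmap_apply, map_neg, map_mul]
    · ring
    · linear_combination q3 - (φ y1 * φ b') * q1
    · linear_combination q4 - (φ y2 * φ c') * q1
    · rw [q3, q4] at q5
      rw [q3, q4]
      linear_combination (φ y2 * φ c' * φ y1 * φ b' * φ r - φ (M1 1 1)) * q1 + φ r * q5
  rw [map_mul, hP]
  simp only [W, map_mul, slmap_up, slmap_lo, mul_one, map_neg]
  exact whitehead _ _ _ _ _ q1 q2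
end basic
end SL2U

/-! ### Commuting unitary matrices -/

namespace SL2U
open Matrix

/-- Commuting unitary matrices are simultaneously diagonalisable: apply the spectral theorem to the
commuting Hermitian matrices `T + T*` and `i(T - T*)`. -/
theorem exists_joint_basis {n : ℕ} {ι : Type*} (T : ι → unitaryGroup (Fin n) ℂ)
    (hT : ∀ i j, Commute (T i) (T j)) :
    ∃ (κ : Type) (_ : Finite κ) (b : Module.Basis κ ℂ (Fin n → ℂ)) (χ : κ → ι → ℂ),
      ∀ k i, (T i : Matrix (Fin n) (Fin n) ℂ) *ᵥ b k = χ k i • b k := by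
  classical
  let Mt : ι → Matrix (Fin n) (Fin n) ℂ := fun i => (T i : Matrix (Fin n) (Fin n) ℂ)
  let A : ι × Bool → Matrix (Fin n) (Fin n) ℂ := fun p =>
    if p.2 then Mt p.1 + (Mt p.1)ᴴ else Complex.I • (Mt p.1 - (Mt p.1)ᴴ)
  have hA : ∀ p, (A p).IsHermitian := by
    rintro ⟨i, b⟩
    cases b
    · simp [A, Matrix.IsHermitian, smul_sub]
      abel
    · simp only [A, Matrix.IsHermitian, conjTranspose_add, conjTranspose_conjTranspose, if_true]
      exact add_comm _ _
  have hc : ∀ i j, Commute (Mt i) (Mt j) := fun i j => by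
    have := congrArg Subtype.val (hT i j).eq
    exact this
  have hinv : ∀ i, (Mt i)ᴴ = ((T i)⁻¹ : unitaryGroup (Fin n) ℂ) := fun i => rfl
  have hc1 : ∀ i j, Commute (Mt i) (Mt j)ᴴ := fun i j => by
    rw [hinv]
    exact congrArg Subtype.val ((hT i j).inv_right).eq
  have hc2 : ∀ i j, Commute (Mt i)ᴴ (Mt j)ᴴ := fun i j => by
    rw [hinv, hinv]
    exact congrArg Subtype.val ((hT i j).inv_left.inv_right).eq
  have hAc : ∀ p q, Commute (A p) (A q) := by
    rintro ⟨i, b⟩ ⟨j, c⟩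
    have h1 := hc i j
    have h2 := hc1 i j
    have h3 := (hc1 j i).symm
    have h4 := hc2 i j
    cases b <;> cases c <;> simp only [A, if_true, Bool.false_eq_true, if_false]
    · exact (((h1.sub_right h2).sub_left (h3.sub_right h4)).smul_left _).smul_right _
    · exact ((h1.add_right h2).sub_left (h3.add_right h4)).smul_left _
    · exact ((h1.sub_right h2).add_left (h3.sub_right h4)).smul_right _
    · exact (h1.add_right h2).add_left (h3.add_right h4)
  have htop := LinearMap.IsSymmetric.iSup_iInf_eq_top_of_commute
    (T := fun p => toEuclideanLin (A p)) (fun p => isSymmetric_toEuclideanLin_iff.2 (hA p))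
    (fun p q _ => by
      have := (hAc p q).eq
      show toEuclideanLin (A p) * toEuclideanLin (A q) = toEuclideanLin (A q) * toEuclideanLin (A p)
      ext1 x
      simp only [Module.End.mul_apply, toLpLin_apply, mulVec_mulVec, this])
  let s : Set (Fin n → ℂ) := {v | ∀ i, ∃ c : ℂ, Mt i *ᵥ v = c • v}
  have hs : ⊤ ≤ Submodule.span ℂ s := by
    rintro v -
    have hv : WithLp.toLp 2 v ∈ (⊤ : Submodule ℂ (EuclideanSpace ℂ (Fin n))) := trivial
    rw [← htop] at hv
    suffices h : ∀ w : EuclideanSpace ℂ (Fin n),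
        w ∈ (⨆ χ : ι × Bool → ℂ, ⨅ p, Module.End.eigenspace (toEuclideanLin (A p)) (χ p)) →
        WithLp.ofLp w ∈ Submodule.span ℂ s from h _ hv
    intro w hw
    induction hw using Submodule.iSup_induction' with
    | zero => simp
    | add x y _ _ hx hy => simpa using add_mem hx hy
    | mem χ x hx =>
      refine Submodule.subset_span fun i => ?_
      rw [Submodule.mem_iInf] at hx
      have h1 := congrArg WithLp.ofLp (Module.End.mem_eigenspace_iff.1 (hx (i, true)))
      have h2 := congrArg WithLp.ofLp (Module.End.mem_eigenspace_iff.1 (hx (i, false)))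
      simp only [A, toLpLin_apply, if_true, Bool.false_eq_true, if_false, WithLp.ofLp_smul] at h1 h2
      refine ⟨(χ (i, true) - Complex.I * χ (i, false)) / 2, ?_⟩
      rw [add_mulVec] at h1
      rw [smul_mulVec, sub_mulVec] at h2
      ext k
      have h1 := congrFun h1 k
      have h2 := congrFun h2 k
      simp only [Pi.add_apply, Pi.smul_apply, Pi.sub_apply, smul_eq_mul] at h1 h2 ⊢
      linear_combination h1 / 2 - Complex.I / 2 * h2 + ((Mt i *ᵥ WithLp.ofLp x) k
        - ((Mt i)ᴴ *ᵥ WithLp.ofLp x) k) / 2 * Complex.I_mul_I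
  let b := Module.Basis.ofSpan hs
  have hb : ∀ k, b k ∈ s := fun k => Module.Basis.ofSpan_subset hs ⟨k, rfl⟩
  choose χ hχ using hb
  exact ⟨_, Module.Finite.finite_basis b, b, χ, hχ⟩

theorem unitary_ext_basis {n : ℕ} {κ : Type} (b : Module.Basis κ ℂ (Fin n → ℂ))
    {x y : unitaryGroup (Fin n) ℂ}
    (h : ∀ k, (x : Matrix (Fin n) (Fin n) ℂ) *ᵥ b k = (y : Matrix (Fin n) (Fin n) ℂ) *ᵥ b k) :
    x = y := by
  apply Subtype.ext
  apply Matrix.toLin'.injective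
  exact b.ext fun k => by simpa using h k

/-- If conjugation by `H` maps a commuting family of unitary matrices to itself, then some power of the
map fixes the family, because the map acts on the finitely many joint eigencharacters. -/
theorem exists_iterate_eq {n : ℕ} {ι : Type*} (T : ι → unitaryGroup (Fin n) ℂ)
    (hT : ∀ i j, Commute (T i) (T j)) (σ : ι → ι) (H : unitaryGroup (Fin n) ℂ)
    (hH : ∀ i, T (σ i) = H * T i * H⁻¹) :
    ∃ j : ℕ, 1 ≤ j ∧ ∀ i, T (σ^[j] i) = T i := by
  classical
  obtain ⟨κ, _, b, χ, hχ⟩ := exists_joint_basis T hT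
  have hHs : ∀ (s : ℕ) i, T (σ^[s] i) = H ^ s * T i * (H ^ s)⁻¹ := by
    intro s
    induction s with
    | zero => simp
    | succ s ih =>
      intro i
      rw [Function.iterate_succ_apply', hH, ih, pow_succ']
      group
  have key : ∀ (s : ℕ) (k : κ), ∃ l : κ, ∀ i, χ k (σ^[s] i) = χ l i := by
    intro s k
    set v : Fin n → ℂ := (((H ^ s)⁻¹ : unitaryGroup (Fin n) ℂ) : Matrix (Fin n) (Fin n) ℂ) *ᵥ b k
      with hv
    have hv0 : v ≠ 0 := by
      intro h0
      apply b.ne_zero k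
      have := congrArg (fun w => ((H ^ s : unitaryGroup (Fin n) ℂ) : Matrix (Fin n) (Fin n) ℂ) *ᵥ w)
        h0
      simp only [hv, mulVec_mulVec, mulVec_zero] at this
      rw [← Submonoid.coe_mul, mul_inv_cancel, OneMemClass.coe_one, one_mulVec] at this
      exact this
    have hev : ∀ i, (T i : Matrix (Fin n) (Fin n) ℂ) *ᵥ v = χ k (σ^[s] i) • v := by
      intro i
      have h1 : T i * (H ^ s)⁻¹ = (H ^ s)⁻¹ * T (σ^[s] i) := by rw [hHs]; group
      rw [hv, mulVec_mulVec, ← Submonoid.coe_mul, h1, Submonoid.coe_mul, ← mulVec_mulVec, hχ,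
        mulVec_smul]
    obtain ⟨l, hl⟩ : ∃ l, b.repr v l ≠ 0 := by
      by_contra! h
      exact hv0 (b.repr.map_eq_zero_iff.1 (Finsupp.ext h))
    refine ⟨l, fun i => ?_⟩
    have := Fintype.ofFinite κ
    have h1 : b.repr ((T i : Matrix (Fin n) (Fin n) ℂ) *ᵥ v) l = χ l i * b.repr v l := by
      conv_lhs => rw [← b.sum_repr v]
      rw [mulVec_sum, map_sum, Finsupp.finsetSum_apply]
      simp only [mulVec_smul, hχ, map_smul, Module.Basis.repr_self, Finsupp.smul_apply, smul_eq_mul,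
        Finsupp.single_apply]
      simp [mul_comm]
    rw [hev, map_smul, Finsupp.smul_apply, smul_eq_mul] at h1
    exact mul_right_cancel₀ hl h1
  choose f hf using key
  obtain ⟨s, s', hne, hs⟩ := Finite.exists_ne_map_eq_of_infinite f
  wlog hlt : s < s' generalizing s s'
  · exact this s' s hne.symm hs.symm (by omega)
  refine ⟨s' - s, by omega, fun i => ?_⟩
  have h1 : T (σ^[s'] i) = T (σ^[s] i) :=
    unitary_ext_basis b fun k => by rw [hχ, hχ, hf, hf, hs]
  have h2 : s' = s + (s' - s) := by omega
  rw [h2, Function.iterate_add_apply, hHs s, hHs s] at h1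
  simpa using h1

/-- A commutative group of unitary matrices of bounded exponent is finite. -/
theorem finite_of_comm_of_pow {n : ℕ} (P : Subgroup (unitaryGroup (Fin n) ℂ))
    (hP : ∀ x ∈ P, ∀ y ∈ P, x * y = y * x) (e : ℕ) (he : e ≠ 0) (hpow : ∀ x ∈ P, x ^ e = 1) :
    Finite P := by
  obtain ⟨κ, _, b, χ, hχ⟩ := exists_joint_basis (fun x : P => (x : unitaryGroup (Fin n) ℂ))
    (fun x y => hP x x.2 y y.2)
  have hroot : ∀ x k, χ k x ∈ {z : ℂ | z ^ e = 1} := by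
    intro x k
    have h1 : ∀ s : ℕ, ((x : unitaryGroup (Fin n) ℂ) : Matrix (Fin n) (Fin n) ℂ) ^ s *ᵥ b k =
        χ k x ^ s • b k := by
      intro s
      induction s with
      | zero => simp
      | succ s ih => rw [pow_succ', ← mulVec_mulVec, ih, mulVec_smul, hχ, smul_smul, ← pow_succ]
    have h2 := h1 e
    rw [← SubmonoidClass.coe_pow, hpow x x.2, OneMemClass.coe_one, one_mulVec] at h2
    have h3 : (χ k x ^ e - 1) • b k = 0 := by rw [sub_smul, ← h2, one_smul, sub_self]
    rcases smul_eq_zero.1 h3 with h | h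
    · exact sub_eq_zero.1 h
    · exact absurd h (b.ne_zero k)
  have hfin : Finite {z : ℂ | z ^ e = 1} := by
    refine Set.Finite.subset (Polynomial.X ^ e - 1 : Polynomial ℂ).roots.toFinset.finite_toSet ?_
    intro z hz
    have h0 : (Polynomial.X ^ e - 1 : Polynomial ℂ) ≠ 0 := by
      simpa using Polynomial.X_pow_sub_C_ne_zero (Nat.pos_of_ne_zero he) (1 : ℂ)
    simpa [h0, sub_eq_zero] using hz
  refine Finite.of_injective (fun (x : P) (k : κ) => (⟨χ k x, hroot x k⟩ : {z : ℂ | z ^ e = 1})) ?_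
  intro x y hxy
  apply Subtype.ext
  refine unitary_ext_basis b fun k => ?_
  rw [hχ, hχ]
  congr 1
  exact congrArg Subtype.val (congrFun hxy k)

end SL2U

/-! ### Conjugation by elements of the fraction field -/

namespace SL2U
open Matrix

section denominators
set_option linter.unusedSectionVars false
variable {R : Type*} [CommRing R] [IsDomain R] {F : Type*} [Field F] [Algebra R F]
  [IsFractionRing R F]

variable (F) in
/-- The inclusion `SL₂(R) → SL₂(F)`, where `F` is the fraction field of `R`. -/
abbrev inc : SL R →* SL F := slmap (algebraMap R F)

theorem inc_injective : Function.Injective (inc F : SL R →* SL F) :=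
  slmap_injective _ (IsFractionRing.injective R F)

/-- An element of `SL₂(F)` with entries in `R` comes from `SL₂(R)`. -/
theorem exists_inc_eq (g : SL F) (a b c d : R) (ha : algebraMap R F a = g 0 0)
    (hb : algebraMap R F b = g 0 1) (hc : algebraMap R F c = g 1 0)
    (hd : algebraMap R F d = g 1 1) :
    ∃ h, inc F (mk a b c d h) = g := by
  refine ⟨IsFractionRing.injective R F ?_, ext2 ha hb hc hd⟩
  rw [map_sub, map_mul, map_mul, map_one, ha, hb, hc, hd, det_eq]

theorem exists_nat_mul_eq (hR : IsArith R) (x : F) :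
    ∃ n : ℕ, 1 ≤ n ∧ ∃ r : R, algebraMap R F r = n * x := by
  obtain ⟨a, b, hb, rfl⟩ := IsFractionRing.div_surjective (A := R) x
  have hb0 : b ≠ 0 := nonZeroDivisors.ne_zero hb
  obtain ⟨n, hn, c, hc⟩ := hR.dvd_nat _ hb0
  refine ⟨n, hn, c * a, ?_⟩
  have hb1 : algebraMap R F b ≠ 0 := by
    rwa [Ne, IsFractionRing.to_map_eq_zero_iff]
  have : (n : F) = algebraMap R F b * algebraMap R F c := by
    rw [← map_mul, ← hc, map_natCast]
  rw [this, map_mul]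
  field_simp

/-- Conjugation by an element of `SL₂(F)` maps deep congruence subgroups into prescribed ones. -/
theorem exists_conj_Gam (hR : IsArith R) (k : SL F) :
    ∃ q : ℕ, 1 ≤ q ∧ ∀ (n : R), ∀ M ∈ Gam (q * n), ∃ M' ∈ Gam n, inc F M' = k * inc F M * k⁻¹ := by
  obtain ⟨n1, h1, a1, e1⟩ := exists_nat_mul_eq hR (k 0 0)
  obtain ⟨n2, h2, a2, e2⟩ := exists_nat_mul_eq hR (k 0 1)
  obtain ⟨n3, h3, a3, e3⟩ := exists_nat_mul_eq hR (k 1 0)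
  obtain ⟨n4, h4, a4, e4⟩ := exists_nat_mul_eq hR (k 1 1)
  set q := n1 * n2 * n3 * n4 with hq
  obtain ⟨α, hα⟩ : ∃ r, algebraMap R F r = q * k 0 0 :=
    ⟨n2 * n3 * n4 * a1, by simp only [map_mul, map_natCast, e1, hq]; push_cast; ring⟩
  obtain ⟨β, hβ⟩ : ∃ r, algebraMap R F r = q * k 0 1 :=
    ⟨n1 * n3 * n4 * a2, by simp only [map_mul, map_natCast, e2, hq]; push_cast; ring⟩
  obtain ⟨γ, hγ⟩ : ∃ r, algebraMap R F r = q * k 1 0 :=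
    ⟨n1 * n2 * n4 * a3, by simp only [map_mul, map_natCast, e3, hq]; push_cast; ring⟩
  obtain ⟨δ, hδ⟩ : ∃ r, algebraMap R F r = q * k 1 1 :=
    ⟨n1 * n2 * n3 * a4, by simp only [map_mul, map_natCast, e4, hq]; push_cast; ring⟩
  have hdet := det_eq k
  have hq1 : 1 ≤ q := by rw [hq]; exact Nat.mul_pos (Nat.mul_pos (Nat.mul_pos h1 h2) h3) h4
  refine ⟨q * q, Nat.mul_pos hq1 hq1, fun n M hM => ?_⟩
  obtain ⟨⟨m1, k1⟩, ⟨m2, k2⟩, ⟨m3, k3⟩, ⟨m4, k4⟩⟩ := mem_Gam.1 hM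
  push_cast at k1 k2 k3 k4
  have f1 := congrArg (algebraMap R F) (eq_add_of_sub_eq' k1)
  have f2 := congrArg (algebraMap R F) k2
  have f3 := congrArg (algebraMap R F) k3
  have f4 := congrArg (algebraMap R F) (eq_add_of_sub_eq' k4)
  simp only [map_add, map_one, map_mul, map_natCast] at f1 f2 f3 f4
  obtain ⟨h, hM'⟩ := exists_inc_eq (k * inc F M * k⁻¹)
    (1 + n * ((α * m1 + β * m3) * δ - (α * m2 + β * m4) * γ))
    (n * (-(α * m1 + β * m3) * β + (α * m2 + β * m4) * α))
    (n * ((γ * m1 + δ * m3) * δ - (γ * m2 + δ * m4) * γ))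
    (1 + n * (-(γ * m1 + δ * m3) * β + (γ * m2 + δ * m4) * α))
    (by
      simp only [map_add, map_sub, map_one, map_mul, hα, hβ, hγ, hδ, mul_00, mul_01,
        inv_00, inv_10, slmap_apply, f1, f2, f3, f4]
      linear_combination -hdet)
    (by
      simp only [map_add, map_neg, map_mul, hα, hβ, mul_00, mul_01,
        inv_01, inv_11, slmap_apply, f1, f2, f3, f4]
      ring)
    (by
      simp only [map_add, map_sub, map_mul, hγ, hδ, mul_10, mul_11,
        inv_00, inv_10, slmap_apply, f1, f2, f3, f4]
      ring)
    (by
      simp only [map_add, map_neg, map_one, map_mul, hα, hβ, hγ, hδ, mul_10, mul_11,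
        inv_01, inv_11, slmap_apply, f1, f2, f3, f4]
      linear_combination -hdet)
  refine ⟨_, mem_Gam.2 ⟨?_, ?_, ?_, ?_⟩, hM'⟩
  · simp
  · simp
  · simp
  · simp

theorem up_mem_Gam {n x : R} (h : n ∣ x) : up x ∈ Gam n := by
  rw [mem_Gam]; simpa [up] using h

theorem exists_tor_mem_Gam (hR : IsArith R) (t : Rˣ) (q : ℕ) (hq : 1 ≤ q) :
    ∃ s : ℕ, 1 ≤ s ∧ tor (t ^ s) ∈ Gam (q : R) := by
  have := hR.finite_quot q hq
  obtain ⟨j, hj⟩ := isUnit_pow_eq_one (t.isUnit.map (Ideal.Quotient.mk (Ideal.span {(q : R)})))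
  refine ⟨j + 1, by omega, ?_⟩
  rw [Gam, MonoidHom.mem_ker, slmap_tor]
  have : Units.map (Ideal.Quotient.mk (Ideal.span {(q : R)})).toMonoidHom (t ^ (j + 1)) = 1 := by
    ext; simpa using hj
  rw [this, tor_one]

/-- For a finite-dimensional unitary representation `π` of `SL₂(R)` and `k ∈ SL₂(F)`, the kernel of
`π` contains the conjugate by `k` of the elementary matrices `up (Y r)` for some `Y ≥ 1`. Conjugation
by a torus element `diag(t, t⁻¹)` multiplies the entry of a unipotent matrix by `t²`, which has
infinite order, but by `exists_iterate_eq` a power of it acts trivially on the image under `π`. -/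
theorem exists_up_conj_mem (hR : IsArith R) (t : Rˣ) (ht : ∀ k : ℕ, 1 ≤ k → t ^ k ≠ 1)
    {n : ℕ} (π : SL R →* unitaryGroup (Fin n) ℂ) (k : SL F) :
    ∃ Y : ℕ, 1 ≤ Y ∧ ∀ r : R, ∃ M ∈ π.ker, inc F M = k * inc F (up (Y * r)) * k⁻¹ := by
  obtain ⟨q, hq, hk⟩ := exists_conj_Gam hR k
  have h1 : ∀ r : R, ∃ A, inc F A = k * inc F (up (q * r)) * k⁻¹ := fun r => by
    obtain ⟨A, -, hA⟩ := hk 1 (up (q * r)) (up_mem_Gam ⟨r, by ring⟩)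
    exact ⟨A, hA⟩
  choose A hA using h1
  have hAadd : ∀ x y, A (x + y) = A x * A y := fun x y => inc_injective (F := F) (by
    rw [map_mul, hA, hA, hA, mul_add, up_add, map_mul]; group)
  obtain ⟨s, hs, hs'⟩ := exists_tor_mem_Gam hR t q hq
  obtain ⟨H, -, hH⟩ := hk 1 (tor (t ^ s)) (by rwa [mul_one])
  have hHA : ∀ r, A ((((t ^ s) ^ 2 : Rˣ) : R) * r) = H * A r * H⁻¹ := fun r =>
    inc_injective (F := F) (by
      have h2 : up (q * ((((t ^ s) ^ 2 : Rˣ) : R) * r)) =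
          tor (t ^ s) * up (q * r) * (tor (t ^ s))⁻¹ := by
        rw [tor_conj_up]; congr 1; push_cast; ring
      rw [hA, h2]
      simp only [map_mul, map_inv, hA, hH]
      group)
  obtain ⟨j, hj, hj'⟩ := exists_iterate_eq (fun r => π (A r))
    (fun x y => by rw [Commute, SemiconjBy, ← map_mul, ← map_mul, ← hAadd, ← hAadd, add_comm])
    (fun r => (((t ^ s) ^ 2 : Rˣ) : R) * r) (π H)
    (fun r => by rw [hHA, map_mul, map_mul, map_inv])
  set w : R := ((((t ^ s) ^ 2) ^ j : Rˣ) : R) with hw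
  have hw1 : w - 1 ≠ 0 := by
    intro h
    apply ht (s * 2 * j) (Nat.mul_pos (Nat.mul_pos hs two_pos) hj)
    rw [pow_mul, pow_mul]
    exact Units.ext (by rw [← hw, Units.val_one]; exact sub_eq_zero.1 h)
  obtain ⟨Y, hY, c, hc⟩ := hR.dvd_nat _ hw1
  refine ⟨q * Y, Nat.mul_pos hq hY, fun r => ⟨A ((w - 1) * (c * r)), ?_, ?_⟩⟩
  · have h3 := hj' (c * r)
    rw [mul_left_iterate] at h3
    simp only [← Units.val_pow_eq_pow_val, ← hw] at h3
    have h4 : A ((w - 1) * (c * r)) * A (c * r) = A (w * (c * r)) := by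
      rw [← hAadd]; congr 1; ring
    rw [MonoidHom.mem_ker]
    have h5 := congrArg π h4
    rw [map_mul, h3] at h5
    exact mul_eq_right.1 h5
  · rw [hA]
    congr 4
    push_cast
    rw [hc]
    ring
end denominators
end SL2U

/-! ### Torus elements commute with congruence subgroups up to a bounded power -/

namespace SL2U
open Matrix

section commutation
variable {R : Type*} [CommRing R] {H : Type*} [Group H] (φ : SL R →* H)

/-- If `M₀₀ ∣ t² - 1`, then `M` and its conjugate by `diag(t, t⁻¹)` differ by elementary
factors. -/
theorem tor_conj_eq (t : Rˣ) (M : SL R) (e : R) (he : M 0 0 * e = (t : R) ^ 2 - 1) :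
    tor t * M * (tor t)⁻¹ =
      lo (-((t⁻¹ : Rˣ) : R) ^ 2 * e * M 1 0) * M * up (M 0 1 * e) := by
  have h1 : (t : R) * ((t⁻¹ : Rˣ) : R) = 1 := by simp
  have hd := det_eq M
  apply ext2 <;> simp only [mul_00, mul_01, mul_10, mul_11, inv_00, inv_01, inv_10, inv_11, up, lo,
    tor, mk_00, mk_01, mk_10, mk_11]
  · linear_combination M 0 0 * h1
  · linear_combination -M 0 1 * he
  · linear_combination (-((t⁻¹ : Rˣ) : R) ^ 2 * M 1 0) * (-he) +
      M 1 0 * (1 + t * ((t⁻¹ : Rˣ) : R)) * h1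
  · linear_combination (M 1 1 + M 0 1 * e * M 1 0 * (1 + t * ((t⁻¹ : Rˣ) : R))) * h1 +
      M 0 1 * e * M 1 0 * ((t⁻¹ : Rˣ) : R) ^ 2 * he

theorem commute_of_dvd (Y : ℕ) (hup : ∀ r : R, φ (up (Y * r)) = 1)
    (hlo : ∀ r : R, φ (lo (Y * r)) = 1) (t : Rˣ) (M : SL R) (h01 : (Y : R) ∣ M 0 1)
    (h10 : (Y : R) ∣ M 1 0) (he : M 0 0 ∣ (t : R) ^ 2 - 1) :
    Commute (φ (tor t)) (φ M) := by
  obtain ⟨e, he⟩ := he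
  obtain ⟨b, hb⟩ := h01
  obtain ⟨c, hc⟩ := h10
  have h := congrArg φ (tor_conj_eq t M e he.symm)
  have e1 : -((t⁻¹ : Rˣ) : R) ^ 2 * e * M 1 0 = Y * (-((t⁻¹ : Rˣ) : R) ^ 2 * e * c) := by
    rw [hc]; ring
  have e2 : M 0 1 * e = Y * (b * e) := by rw [hb]; ring
  rw [e1, e2] at h
  simp only [map_mul, hup, hlo, mul_one, one_mul, map_inv] at h
  exact mul_inv_eq_iff_eq_mul.1 h

/-- A uniform power `m` of every torus element commutes with a congruence subgroup modulo any normal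
subgroup containing the elementary matrices of some level. A power of `diag(t, t⁻¹)` commutes with
`M` as soon as it is congruent to `1` modulo the corner entry of `M`; using elementary operations
that entry can be made a prime number in a suitable arithmetic progression, for which the exponent
is controlled at any given prime `l`. The point is that `m` depends neither on the level `Y` nor on
the normal subgroup. -/
theorem exists_uniform_commute [CharZero R] (hR : IsArith R) :
    ∃ m : ℕ, 1 ≤ m ∧ ∀ {H : Type _} [Group H] (φ : SL R →* H) (Y : ℕ), 1 ≤ Y →
      (∀ r : R, φ (up (Y * r)) = 1) → ∀ t : Rˣ, ∀ M ∈ Gam ((Y ^ 2 : ℕ) : R),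
        Commute (φ (tor (t ^ m))) (φ M) := by
  obtain ⟨E, G, hE, hG1, hG2, hG3⟩ := hR.exponents
  refine ⟨E ^ 2, Nat.pow_pos hE, ?_⟩
  intro H _ φ Y hY hup t M hM
  have hlo : ∀ r : R, φ (lo (Y * r)) = 1 := fun r => by
    have := wey_conj_up (Y * (-r))
    rw [show -((Y : R) * -r) = Y * r by ring] at this
    rw [← this, map_mul, map_mul, hup, mul_one, map_inv, mul_inv_cancel]
  have hper : ∀ j : ℕ, Commute (φ (tor (t ^ j))) (φ M) ↔
      MulAction.period (MulAut.conj (φ (tor t))) (φ M) ∣ j := fun j => by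
    rw [← MulAction.pow_smul_eq_iff_period_dvd, ← map_pow, MulAut.smul_def, MulAut.conj_apply,
      mul_inv_eq_iff_eq_mul, tor_pow, map_pow]
    rfl
  have hGdvd : ∀ p : ℕ, p.Prime → (p : R) ∣ ((t ^ G p : Rˣ) : R) ^ 2 - 1 := fun p hp => by
    have h1 : (p : R) ∣ (t : R) ^ G p - 1 := (Dvd.intro_left _ (sq (p : R)).symm).trans
      (hG2 p hp t ⟨((t⁻¹ : Rˣ) : R), 0, by simp⟩)
    push_cast
    exact h1.trans ⟨(t : R) ^ G p + 1, by ring⟩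
  rw [hper]
  refine dvd_of_padic (by positivity) fun l hl => ?_
  have : Fact l.Prime := ⟨hl⟩
  obtain ⟨Q, c, hQ, -, -, hcQ, hval⟩ := hG3 l hl
  obtain ⟨A, hAY, hA, hAc⟩ := Nat.forall_exists_prime_gt_and_modEq Y (by omega) hcQ
  have hAY2 : A.Coprime (Y ^ 2) := Nat.Coprime.pow_right 2
    ((Nat.Prime.coprime_iff_not_dvd hA).2 fun h => by have := Nat.le_of_dvd hY h; omega)
  have hAQ : A.Coprime Q := by
    rw [Nat.Coprime, hAc.gcd_eq]; exact hcQ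
  obtain ⟨d2, c2, h2⟩ : ∃ d2 c2 : R, (A : R) * d2 - Y * (Y * c2) = 1 := by
    obtain ⟨u, v, huv⟩ := Nat.isCoprime_iff_coprime.2 hAY2
    have := congrArg (Int.cast : ℤ → R) huv
    push_cast at this
    exact ⟨u, -v, by linear_combination this⟩
  -- The corner of `M` is `1` modulo `Y ^ 2`, and this congruence persists under the admissible
  -- operations. Multiplication by `M2`, with prime corner `A`, brings it into a class modulo
  -- `Y ^ 2 * Q` whose primes lie in the class `c` modulo `Q`.
  set M2 : SL R := mk A Y (Y * c2) d2 h2 with hM2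
  have hc2 : Commute (φ (tor (t ^ G A))) (φ M2) :=
    commute_of_dvd φ Y hup hlo _ _ dvd_rfl ⟨c2, rfl⟩ (hGdvd A hA)
  obtain ⟨⟨m1, k1⟩, ⟨m2, k2⟩, ⟨m3, k3⟩, ⟨m4, k4⟩⟩ := mem_Gam.1 hM
  push_cast at k1 k2 k3 k4
  set M1 := M * M2 with hM1
  have a1 : M1 0 0 = M 0 0 * A + M 0 1 * (Y * c2) := by rw [hM1, mul_00]; rfl
  have b1 : M1 0 1 = Y * (M 0 0 + Y * m2 * d2) := by
    rw [hM1, mul_01]; simp only [hM2, mk_01, mk_11, k2]; ring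
  have c1 : M1 1 0 = Y * (Y * m3 * A + M 1 1 * c2) := by
    rw [hM1, mul_10]; simp only [hM2, mk_00, mk_10, k3]; ring
  set b' := M 0 0 + Y * m2 * d2 with hb'
  have hcop : IsCoprime (M1 0 0) b' :=
    ⟨M1 1 1, -(Y * M1 1 0), by have := det_eq M1; rw [b1] at this; linear_combination this⟩
  obtain ⟨β, p, ⟨e, hβ⟩, hβn, hp, -, hpA, w, hw⟩ := exists_prime_dvd hR hcop (Y ^ 2 * Q)
    (Nat.mul_pos (Nat.pow_pos hY) hQ) A (Nat.Coprime.mul_right hAY2 hAQ) 0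
  have hdiv : ((Y : R) ^ 2) ∣ p - M1 0 0 := by
    obtain ⟨z, hz⟩ := (Nat.modEq_iff_dvd.1 (hpA.symm.of_mul_right Q))
    have := congrArg (Int.cast : ℤ → R) hz
    push_cast at this
    exact ⟨z - m1 * A - m2 * (Y * c2), by rw [a1, k2]; linear_combination this - A * k1⟩
  have hcopβ : IsCoprime (Y ^ 2 : R) β := by
    rw [Nat.cast_mul] at hβn
    simpa using hβn.of_mul_right_left.symm
  obtain ⟨w', hw'⟩ : (Y : R) ^ 2 ∣ w := hcopβ.dvd_of_dvd_mul_left (by rwa [hw] at hdiv)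
  set M3 := M1 * up (Y * e) * lo (Y * w') with hM3
  have e01 : (M1 * up (Y * e)) 0 1 = Y * β := by
    rw [mul_01]; simp only [up, mk_01, mk_11, b1]; linear_combination -(Y : R) * hβ
  have hM300 : M3 0 0 = p := by
    rw [hM3, mul_00, e01, mul_00]
    simp only [up, lo, mk_00, mk_10]
    rw [hw'] at hw
    linear_combination -hw
  have hM301 : M3 0 1 = Y * β := by
    rw [hM3, mul_01, e01]; simp [lo]
  have hM310 : (Y : R) ∣ M3 1 0 := by
    rw [hM3, mul_10, mul_10]
    simp only [up, lo, mk_00, mk_10, c1]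
    exact dvd_add ⟨Y * m3 * A + M 1 1 * c2, by ring⟩ ⟨_, mul_left_comm _ _ _⟩
  have hc3 : Commute (φ (tor (t ^ G p))) (φ M3) :=
    commute_of_dvd φ Y hup hlo _ _ ⟨β, hM301⟩ hM310 (hM300 ▸ hGdvd p hp)
  have hφM : φ M = φ M3 * (φ M2)⁻¹ := by
    rw [hM3, hM1]; simp only [map_mul, hup, hlo]; group
  refine ⟨G A * G p, Nat.mul_ne_zero (Nat.one_le_iff_ne_zero.1 (hG1 A hA))
    (Nat.one_le_iff_ne_zero.1 (hG1 p hp)), ?_, ?_⟩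
  · rw [← hper, hφM]
    refine Commute.mul_right ?_ (Commute.inv_right ?_)
    · rw [mul_comm, pow_mul, tor_pow, map_pow]; exact hc3.pow_left _
    · rw [pow_mul, tor_pow, map_pow]; exact hc2.pow_left _
  · rw [padicValNat.mul (Nat.one_le_iff_ne_zero.1 (hG1 A hA))
      (Nat.one_le_iff_ne_zero.1 (hG1 p hp)), sq,
      padicValNat.mul (by omega) (by omega)]
    exact add_le_add (hval A hA hAc)
      (hval p hp ((hpA.of_mul_left _).trans hAc))
end commutation
end SL2U

/-! ### Invariance under the fraction field and centrality -/

namespace SL2U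
open Matrix

/-- Over a field, `SL₂` is generated by the elementary matrices. -/
theorem eq_top_of_up_lo {F : Type*} [Field F] (H : Subgroup (SL F)) (hup : ∀ x, up x ∈ H)
    (hlo : ∀ x, lo x ∈ H) (g : SL F) : g ∈ H := by
  have key : ∀ g : SL F, g 1 0 ≠ 0 → g ∈ H := fun g hg => by
    have : g = up ((g 0 0 - 1) / g 1 0) * lo (g 1 0) * up ((g 1 1 - 1) / g 1 0) := by
      have hd := det_eq g
      apply ext2 <;> simp only [mul_00, mul_01, mul_10, mul_11, up, lo, mk_00, mk_01, mk_10, mk_11]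
      · field_simp; ring
      · field_simp; linear_combination -hd
      · field_simp; ring
      · field_simp; ring
    rw [this]
    exact H.mul_mem (H.mul_mem (hup _) (hlo _)) (hup _)
  by_cases hg : g 1 0 = 0
  · rw [← H.mul_mem_cancel_left (hlo 1)]
    apply key
    have hd := det_eq g
    rw [mul_10]
    simp only [lo, mk_10, mk_11, hg, one_mul, mul_zero, add_zero]
    rintro h0
    simp [hg, h0] at hd
  · exact key g hg

section virtual
set_option linter.unusedSectionVars false
variable {R : Type*} [CommRing R] [IsDomain R] {F : Type*} [Field F] [Algebra R F]
  [IsFractionRing R F]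

/-- For a homomorphism `π` on `SL₂(R)`, the group of those `g ∈ SL₂(F)` for which there is `n ≥ 1`
such that `π(gMg⁻¹) = π(M)` whenever `M ∈ Γ(n)` and `gMg⁻¹ ∈ SL₂(R)`. -/
def virtStab (F : Type*) [Field F] [Algebra R F] [IsFractionRing R F] (hR : IsArith R)
    {H : Type*} [Group H] (π : SL R →* H) : Subgroup (SL F) where
  carrier := {g | ∃ n : ℕ, 1 ≤ n ∧ ∀ M ∈ Gam (n : R), ∀ M', inc F M' = g * inc F M * g⁻¹ →
    π M' = π M}
  one_mem' := ⟨1, le_rfl, fun M _ M' h => by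
    rw [one_mul, inv_one, mul_one] at h; rw [inc_injective h]⟩
  mul_mem' := by
    rintro g h ⟨n, hn, hg⟩ ⟨n', hn', hh⟩
    obtain ⟨q, hq, hq'⟩ := exists_conj_Gam hR h
    refine ⟨n' * (q * n), Nat.mul_pos hn' (Nat.mul_pos hq hn), fun M hM M' h' => ?_⟩
    obtain ⟨M1, hM1, h1⟩ := hq' n M (Gam_le (by push_cast; exact Dvd.intro_left _ rfl) hM)
    rw [← hh M (Gam_le (by push_cast; exact Dvd.intro _ rfl) hM) M1 h1]
    exact hg M1 hM1 M' (by rw [h', h1]; group)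
  inv_mem' := by
    rintro g ⟨n, hn, hg⟩
    obtain ⟨q, hq, hq'⟩ := exists_conj_Gam hR g⁻¹
    refine ⟨q * n, Nat.mul_pos hq hn, fun M hM M' h' => ?_⟩
    obtain ⟨M1, hM1, h1⟩ := hq' n M (by rwa [Nat.cast_mul] at hM)
    obtain rfl : M1 = M' := inc_injective (F := F) (h1.trans h'.symm)
    exact (hg M1 hM1 M (by rw [h']; group)).symm

variable [CharZero R] {n : ℕ} (hR : IsArith R) (π : SL R →* unitaryGroup (Fin n) ℂ)

/-- The level in `exists_up_conj_mem` can be chosen uniformly over the coset `k · SL₂(R)`, as only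
finitely many classes modulo a congruence subgroup need to be considered. -/
theorem exists_up_mem_normalCore (hR : IsArith R) (π : SL R →* unitaryGroup (Fin n) ℂ)
    (t : Rˣ) (ht : ∀ k : ℕ, 1 ≤ k → t ^ k ≠ 1) (k : SL F) :
    ∃ Y : ℕ, 1 ≤ Y ∧ ∀ (r : R) (γ : SL R), ∃ L ∈ π.ker,
      inc F L = k * inc F (γ * up (Y * r) * γ⁻¹) * k⁻¹ := by
  obtain ⟨q, hq, hq'⟩ := exists_conj_Gam hR k
  have := hR.finite_quot q hq
  have := Gam_finiteIndex (q : R)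
  have := Fintype.ofFinite (SL R ⧸ Gam (q : R))
  have h1 := fun γ : SL R => exists_up_conj_mem hR t ht π (k * inc F γ)
  choose Y hY hY' using h1
  refine ⟨∏ c : SL R ⧸ Gam (q : R), Y c.out,
    Nat.succ_le_of_lt (Finset.prod_pos fun c _ => hY _), fun r γ => ?_⟩
  set c : SL R ⧸ Gam (q : R) := QuotientGroup.mk γ
  obtain ⟨z, hz⟩ := Finset.dvd_prod_of_mem (fun c : SL R ⧸ Gam (q : R) => Y c.out)
    (Finset.mem_univ c)
  obtain ⟨L, hL, hL'⟩ := hY' c.out (z * r)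
  have hδ : γ * (c.out)⁻¹ ∈ Gam (q * 1 : R) := by
    rw [mul_one]
    apply (inferInstance : (Gam (q : R)).Normal).mem_comm
    exact QuotientGroup.eq.1 (QuotientGroup.out_eq' c)
  obtain ⟨δ', -, hδ'⟩ := hq' 1 _ hδ
  refine ⟨δ' * L * δ'⁻¹, (inferInstance : π.ker.Normal).conj_mem _ hL _, ?_⟩
  have e : ((∏ c : SL R ⧸ Gam (q : R), Y c.out : ℕ) : R) * r = Y c.out * (z * r) := by
    rw [hz]; push_cast; ring
  rw [e]
  simp only [map_mul, map_inv, hL', hδ']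
  group

/-- A power of each torus element of infinite order has all its `SL₂(F)`-conjugates in `virtStab`:
apply `exists_uniform_commute` to the normal core of the group of `x ∈ SL₂(R)` with
`kxk⁻¹ ∈ ker π`. -/
theorem exists_conj_tor_mem : ∃ m : ℕ, 1 ≤ m ∧ ∀ t : Rˣ, (∀ k : ℕ, 1 ≤ k → t ^ k ≠ 1) →
    ∀ k : SL F, k * inc F (tor (t ^ m)) * k⁻¹ ∈ virtStab F hR π := by
  obtain ⟨m, hm, h⟩ := exists_uniform_commute hR
  refine ⟨m, hm, fun t ht k => ?_⟩
  obtain ⟨Y, hY, hY'⟩ := exists_up_mem_normalCore hR π t ht k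
  set D : Subgroup (SL R) :=
    (π.ker.map (inc F)).comap ((MulAut.conj k).toMonoidHom.comp (inc F)) with hD
  have hDm : ∀ x, x ∈ D ↔ ∃ L ∈ π.ker, inc F L = k * inc F x * k⁻¹ := fun x => by
    rw [hD, Subgroup.mem_comap, Subgroup.mem_map]; rfl
  have hc := h (QuotientGroup.mk' D.normalCore) Y hY (fun r => by
    rw [QuotientGroup.mk'_apply, QuotientGroup.eq_one_iff]
    exact fun γ => (hDm _).2 (hY' r γ)) t
  obtain ⟨q, hq, hq'⟩ := exists_conj_Gam hR k⁻¹
  refine ⟨q * Y ^ 2, Nat.mul_pos hq (Nat.pow_pos hY), fun M hM M' hM' => ?_⟩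
  rw [Nat.cast_mul] at hM
  obtain ⟨M1, hM1, h1⟩ := hq' _ M hM
  have hcM := hc M1 hM1
  have h2 : tor (t ^ m) * M1 * (tor (t ^ m))⁻¹ * M1⁻¹ ∈ D.normalCore := by
    rw [← QuotientGroup.eq_one_iff, ← QuotientGroup.mk'_apply]
    simp only [map_mul, map_inv]
    rw [hcM.eq]; group
  obtain ⟨L, hL, hL'⟩ := (hDm _).1 (Subgroup.normalCore_le _ h2)
  have h3 : M' = L * M := inc_injective (F := F) (by
    simp only [map_mul, map_inv] at hL' h1 ⊢
    rw [hM', hL', h1]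
    group)
  rw [h3, map_mul, (MonoidHom.mem_ker).1 hL, one_mul]

/-- Every element of `SL₂(F)` leaves `π` invariant on a deep enough congruence subgroup. Indeed
`SL₂(F)` is generated by the elementary matrices, and each of these is a commutator of a torus element
of infinite order with an elementary matrix. -/
theorem mem_virtStab (t : Rˣ) (ht : ∀ k : ℕ, 1 ≤ k → t ^ k ≠ 1) (g : SL F) :
    g ∈ virtStab F hR π := by
  obtain ⟨m, hm, h⟩ := exists_conj_tor_mem (F := F) hR π
  have h := h t ht
  set s : Fˣ := Units.map (algebraMap R F).toMonoidHom (t ^ m) with hs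
  rw [slmap_tor, ← hs] at h
  have hs1 : 1 - (s : F) ^ 2 ≠ 0 := by
    intro h0
    apply ht (m * 2) (by omega)
    apply Units.ext
    apply IsFractionRing.injective R F
    rw [pow_mul]
    have : (s : F) = algebraMap R F ((t ^ m : Rˣ) : R) := rfl
    rw [this, ← map_pow] at h0
    rw [Units.val_one, map_one, Units.val_pow_eq_pow_val]
    exact (sub_eq_zero.1 h0).symm
  have key : ∀ (w : SL F) (z : F), w * up z * w⁻¹ ∈ virtStab F hR π := fun w z => by
    have h1 := (virtStab F hR π).mul_mem (h (w * up (z / (1 - (s : F) ^ 2))))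
      ((virtStab F hR π).inv_mem (h w))
    have h2 := tor_conj_up s (-(z / (1 - (s : F) ^ 2)))
    have h3 : z = z / (1 - (s : F) ^ 2) + (s : F) ^ 2 * (-(z / (1 - (s : F) ^ 2))) := by
      field_simp; ring
    rw [h3, up_add, ← h2, up_neg]
    convert h1 using 1
    group
  refine eq_top_of_up_lo _ (fun z => ?_) (fun z => ?_) g
  · simpa using key 1 z
  · have := key wey (-z)
    rwa [wey_conj_up, neg_neg] at this

/-- A deep enough congruence subgroup has central image: `γ ∈ SL₂(R)` commutes under `π` with some
`Γ(l)`, hence with `Γ(Y²)` for a `Y` not depending on `γ`, by strong approximation. -/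
theorem exists_central (hR : IsArith R) (π : SL R →* unitaryGroup (Fin n) ℂ) (t : Rˣ)
    (ht : ∀ k : ℕ, 1 ≤ k → t ^ k ≠ 1) :
    ∃ Y : ℕ, 1 ≤ Y ∧ (∀ r : R, π (up (Y * r)) = 1) ∧ (∀ r : R, π (lo (Y * r)) = 1) ∧
      ∀ M ∈ Gam ((Y ^ 2 : ℕ) : R), ∀ γ, Commute (π M) (π γ) := by
  obtain ⟨Y, hY, hY'⟩ := exists_up_conj_mem hR t ht π (1 : SL (FractionRing R))
  have hup : ∀ r : R, π (up (Y * r)) = 1 := fun r => by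
    obtain ⟨M, hM, h⟩ := hY' r
    rw [one_mul, inv_one, mul_one] at h
    rw [← inc_injective h]; exact hM
  have hlo : ∀ r : R, π (lo (Y * r)) = 1 := fun r => by
    have := wey_conj_up (Y * (-r))
    rw [show -((Y : R) * -r) = Y * r by ring] at this
    rw [← this, map_mul, map_mul, hup, mul_one, map_inv, mul_inv_cancel]
  refine ⟨Y, hY, hup, hlo, fun M hM γ => ?_⟩
  obtain ⟨l, hl, hl'⟩ := mem_virtStab hR π t ht (inc (FractionRing R) γ)
  obtain ⟨h1, h2, h3, -⟩ := mem_Gam.1 hM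
  push_cast at h1 h2 h3
  have hYY : (Y : R) ∣ Y ^ 2 := Dvd.intro _ (sq (Y : R)).symm
  have := mem_of_elementary hR Y Y l hY hY hl ((Subgroup.centralizer {π γ}).comap π)
    (fun r => by simp [hup]) (fun r => by simp [hlo])
    (fun x hx => by
      have := hl' x hx (γ * x * γ⁻¹) (by simp only [map_mul, map_inv])
      rw [Subgroup.mem_comap, Subgroup.mem_centralizer_singleton_iff]
      rw [map_mul, map_mul, map_inv, mul_inv_eq_iff_eq_mul] at this
      exact this.symm)
    M (by rwa [← sq]) (hYY.trans h2) (hYY.trans h3)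
  rw [Subgroup.mem_comap, Subgroup.mem_centralizer_singleton_iff] at this
  exact this
end virtual
end SL2U

/-! ### Invariant homomorphisms to commutative groups have bounded exponent -/

namespace SL2U
open Matrix

section symbol
variable {R : Type*} [CommRing R] {A : Type*} [CommGroup A] (φ : SL R →* A)

/-- A homomorphism killing the elementary matrices only depends on the first row. -/
theorem phi_row (hlo : ∀ r, φ (lo r) = 1) {M M' : SL R} (h0 : M' 0 0 = M 0 0)
    (h1 : M' 0 1 = M 0 1) : φ M' = φ M := by
  have hd := det_eq M
  have hd' := det_eq M'
  rw [h0, h1] at hd'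
  have : M' = lo (M' 1 0 * M 1 1 - M' 1 1 * M 1 0) * M := by
    apply ext2 <;>
      simp only [mul_00, mul_01, mul_10, mul_11, lo, mk_00, mk_01, mk_10, mk_11, h0, h1]
    · ring
    · ring
    · linear_combination M 1 0 * hd' - M' 1 0 * hd
    · linear_combination M 1 1 * hd' - M' 1 1 * hd
  rw [this, map_mul, hlo, one_mul]

/-- The value at a matrix with first row `(a, b)` only depends on `a` and on `b` modulo `a`. -/
theorem phi_congr (hup : ∀ r, φ (up r) = 1) (hlo : ∀ r, φ (lo r) = 1) {M M' : SL R}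
    (h0 : M' 0 0 = M 0 0) (h1 : M 0 0 ∣ M' 0 1 - M 0 1) : φ M' = φ M := by
  obtain ⟨x, hx⟩ := h1
  have : φ M' = φ (M * up x) := phi_row φ hlo
    (by rw [mul_00, h0]; simp [up])
    (by rw [mul_01]; simp only [up, mk_01, mk_11]; linear_combination hx)
  rw [this, map_mul, hup, mul_one]

theorem phi_wey (hup : ∀ r, φ (up r) = 1) (hlo : ∀ r, φ (lo r) = 1) : φ wey = 1 := by
  rw [wey_eq]; simp [hup, hlo]

/-- The first rows `(a, b)` and `(b, -a)` give the same value. -/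
theorem phi_rot (hup : ∀ r, φ (up r) = 1) (hlo : ∀ r, φ (lo r) = 1) {M M' : SL R}
    (h0 : M' 0 0 = M 0 1) (h1 : M' 0 1 = -M 0 0) : φ M' = φ M := by
  have : φ M' = φ (M * wey⁻¹) := phi_row φ hlo
    (by rw [mul_00, h0]; simp [wey])
    (by rw [mul_01, h1]; simp [wey])
  rw [this, map_mul, map_inv, phi_wey φ hup hlo, inv_one, mul_one]

theorem phi_transpose (hup : ∀ r, φ (up r) = 1) (hlo : ∀ r, φ (lo r) = 1) {M M' : SL R}
    (h00 : M' 0 0 = M 0 0) (h01 : M' 0 1 = M 1 0) (h10 : M' 1 0 = M 0 1) (h11 : M' 1 1 = M 1 1) :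
    φ M' = (φ M)⁻¹ := by
  have : M' = wey * M⁻¹ * wey⁻¹ := by
    apply ext2 <;> simp [mul_00, mul_01, mul_10, mul_11, wey, h00, h01, h10, h11]
  rw [this]
  simp [phi_wey φ hup hlo]

theorem dvd_pow_entries (s : R) (M : SL R) (h : s ∣ M 1 0) (j : ℕ) :
    s ∣ (M ^ j) 1 0 ∧ s ∣ (M ^ j) 0 0 - M 0 0 ^ j := by
  induction j with
  | zero => simp
  | succ j ih =>
    obtain ⟨⟨x, hx⟩, ⟨y, hy⟩⟩ := ih
    obtain ⟨z, hz⟩ := h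
    rw [pow_succ (M : SL R), mul_10, mul_00, hx, hz]
    exact ⟨⟨x * M 0 0 + (M ^ j) 1 1 * z, by ring⟩,
      ⟨y * M 0 0 + (M ^ j) 0 1 * z, by rw [pow_succ]; linear_combination M 0 0 * hy⟩⟩

set_option linter.unusedSectionVars false
variable [IsDomain R] [CharZero R]

/-- The invariance of `φ` under `SL₂(F)` on deep congruence subgroups, for `F = Frac R`. -/
def VirtInv : Prop := ∀ g : SL (FractionRing R), ∃ n : ℕ, 1 ≤ n ∧ ∀ M ∈ Gam (n : R), ∀ M',
  inc (FractionRing R) M' = g * inc (FractionRing R) M * g⁻¹ → φ M' = φ M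

/-- Conjugation by `diag(s, s⁻¹)` maps `(a, b; s²c, d)` to `(a, s²b; c, d)`. By strong approximation
it does not change the value of `φ` if `a ≡ 1` modulo `s²`, so it only changes it by a `k`-torsion
element if `aᵏ ≡ 1` modulo `s²`. -/
theorem phi_delta (hR : IsArith R) (hup : ∀ r, φ (up r) = 1) (hlo : ∀ r, φ (lo r) = 1)
    (hinv : VirtInv φ) (s : ℕ) (hs : 1 ≤ s) {M M' : SL R} (h00 : M' 0 0 = M 0 0)
    (h01 : M' 0 1 = s ^ 2 * M 0 1) (h10 : M 1 0 = s ^ 2 * M' 1 0) (h11 : M' 1 1 = M 1 1) (k : ℕ)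
    (hk : (s : R) ^ 2 ∣ M 0 0 ^ k - 1) : φ M' ^ k = φ M ^ k := by
  have hs0 : (s : FractionRing R) ≠ 0 := by
    have h1 : (s : R) ≠ 0 := by exact_mod_cast Nat.one_le_iff_ne_zero.1 hs
    have := (IsFractionRing.to_map_eq_zero_iff (K := FractionRing R)).not.2 h1
    rwa [map_natCast] at this
  set g : SL (FractionRing R) := tor (Units.mk0 _ hs0) with hg
  have hconj : ∀ M M' : SL R, M' 0 0 = M 0 0 → M' 0 1 = s ^ 2 * M 0 1 → M 1 0 = s ^ 2 * M' 1 0 →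
      M' 1 1 = M 1 1 → inc (FractionRing R) M' = g * inc (FractionRing R) M * g⁻¹ := by
    intro M M' h00 h01 h10 h11
    rw [eq_mul_inv_iff_mul_eq]
    apply ext2 <;> simp only [mul_00, mul_01, mul_10, mul_11, hg, tor, mk_00, mk_01, mk_10, mk_11,
      slmap_apply, h00, h01, h10, h11, map_mul, map_pow, map_natCast, Units.val_mk0,
      Units.val_inv_eq_inv_val] <;> field_simp <;> ring
  let H : Subgroup (SL R) :=
    { carrier := {M | ∃ M', inc (FractionRing R) M' = g * inc (FractionRing R) M * g⁻¹ ∧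
        φ M' = φ M}
      one_mem' := ⟨1, by simp, rfl⟩
      mul_mem' := by
        rintro x y ⟨x', hx, hx'⟩ ⟨y', hy, hy'⟩
        exact ⟨x' * y', by rw [map_mul, map_mul, hx, hy]; group, by rw [map_mul, map_mul, hx', hy']⟩
      inv_mem' := by
        rintro x ⟨x', hx, hx'⟩
        exact ⟨x'⁻¹, by rw [map_inv, map_inv, hx]; group, by rw [map_inv, map_inv, hx']⟩ }
  obtain ⟨n, hn, hn'⟩ := hinv g
  obtain ⟨q, hq, hq'⟩ := exists_conj_Gam hR g
  obtain ⟨d1, d2⟩ := dvd_pow_entries ((s : R) ^ 2) M ⟨_, h10⟩ k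
  obtain ⟨M2, h2, h2'⟩ : M ^ k ∈ H := mem_of_elementary hR 1 (s ^ 2) (q * n) le_rfl
    (Nat.pow_pos hs) (Nat.mul_pos hq hn) H
    (fun r => ⟨up (s ^ 2 * r), hconj _ _ rfl (by simp [up]) (by simp [up]) rfl, by rw [hup, hup]⟩)
    (fun r => ⟨lo r, hconj _ _ rfl (by simp [lo]) (by simp [lo]) rfl, by rw [hlo, hlo]⟩)
    (fun x hx => by
      rw [Nat.cast_mul] at hx
      obtain ⟨x', -, hx'⟩ := hq' n x hx
      exact ⟨x', hx', hn' x (Gam_le (Dvd.intro_left _ rfl) hx) x' hx'⟩)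
    (M ^ k) (by push_cast; rw [one_mul]; simpa using dvd_add d2 hk) (by simp) (by simpa using d1)
  have : M2 = M' ^ k := inc_injective (F := FractionRing R) (by
    rw [h2, map_pow, map_pow, hconj M M' h00 h01 h10 h11, conj_pow])
  rw [← map_pow, ← map_pow, ← this, h2']

/-- Write `φ(a, b)` for the value of `φ` at a matrix with first row `(a, b)`. Then
`φ(p, β) φ(p, -β)` is `k`-torsion if `βᵏ ≡ 1` modulo `p²`. With `pw ≡ 1` modulo `β`, `phi_delta`
compares `φ(β, -w)` to `φ(β, -p²w) = φ(β, -p) = φ(p, β)`, whereas transposition shows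
`φ(β, -w) = φ(β, p)⁻¹ = φ(p, -β)⁻¹`. -/
theorem phi_neg (hR : IsArith R) (hup : ∀ r, φ (up r) = 1) (hlo : ∀ r, φ (lo r) = 1)
    (hinv : VirtInv φ) (p : ℕ) (hp : p.Prime) (P Pm : SL R) (h0 : P 0 0 = p) (h0' : Pm 0 0 = p)
    (h1 : Pm 0 1 = -P 0 1) (k : ℕ) (hk : (p : R) ^ 2 ∣ P 0 1 ^ k - 1) :
    φ P ^ k * φ Pm ^ k = 1 := by
  have hd := det_eq P
  rw [h0] at hd
  set β := P 0 1
  set x := P 1 0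
  set w := P 1 1
  have hZ := phi_transpose φ hup hlo (M := mk β p (-w) (-x) (by linear_combination hd))
    (M' := mk β (-w) p (-x) (by linear_combination hd)) rfl rfl rfl rfl
  have e1 := phi_rot φ hup hlo (M' := Pm) (M := mk β p (-w) (-x) (by linear_combination hd)) h0' h1
  have hX : φ (lo (p * x) * mk β (-w) p (-x) (by linear_combination hd)) =
      φ (mk β (-w) p (-x) (by linear_combination hd)) := by rw [map_mul, hlo, one_mul]
  have hδ := phi_delta φ hR hup hlo hinv p hp.one_lt.le
    (M := lo (p * x) * mk β (-w) p (-x) (by linear_combination hd))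
    (M' := mk β (p ^ 2 * -w) w (-x - p * x * w) (by linear_combination (1 + p * w) * hd))
    (by rw [mul_00]; simp [lo]) (by rw [mul_01]; simp [lo])
    (by rw [mul_10]; simp only [lo, mk_00, mk_10, mk_11]; linear_combination -p * hd)
    (by rw [mul_11]; simp only [lo, mk_01, mk_11, mk_10]; ring) k
    (by rw [mul_00]; simpa [lo] using hk)
  have e2 : φ (mk β (p ^ 2 * -w) w (-x - p * x * w) (by linear_combination (1 + p * w) * hd)) =
      φ (mk β (-p) w (-x) (by linear_combination hd)) :=
    phi_congr φ hup hlo rfl ⟨-p * x, by simp only [mk_01, mk_00]; linear_combination (-p : R) * hd⟩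
  have e3 : φ (mk β (-p) w (-x) (by linear_combination hd)) = φ P :=
    phi_rot φ hup hlo rfl (by simp [h0])
  rw [e2, e3, hX, hZ] at hδ
  rw [hδ, e1, ← mul_pow, inv_mul_cancel, one_pow]

/-- If `q² ≡ -1` modulo `p` and `pᵏ ≡ 1` modulo `q²`, then `φ(p, β)` and
`φ(p, q²β) = φ(p, -β)` agree up to `k`-torsion, by `phi_delta`. -/
theorem phi_sq (hR : IsArith R) (hup : ∀ r, φ (up r) = 1) (hlo : ∀ r, φ (lo r) = 1)
    (hinv : VirtInv φ) (p q : ℕ) (hp : p.Prime) (hq : q.Prime) (hpq : p ≠ q)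
    (hqp : p ∣ q ^ 2 + 1) (P : SL R) (h0 : P 0 0 = p) (k : ℕ) (hk : (q : R) ^ 2 ∣ (p : R) ^ k - 1) :
    ∃ Pm : SL R, Pm 0 0 = p ∧ Pm 0 1 = -P 0 1 ∧ φ Pm ^ k = φ P ^ k := by
  have hd := det_eq P
  rw [h0] at hd
  set β := P 0 1
  set x := P 1 0
  set w := P 1 1
  obtain ⟨y, c, hy⟩ : ∃ y c : R, x + p * y = q ^ 2 * c := by
    obtain ⟨u, v, huv⟩ := Nat.isCoprime_iff_coprime.2
      (((Nat.coprime_primes hp hq).2 hpq).pow_right 2)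
    have := congrArg (Int.cast : ℤ → R) huv
    push_cast at this
    exact ⟨-(u * x), v * x, by linear_combination -x * this⟩
  obtain ⟨z, hz⟩ := hqp
  have hz' := congrArg (Nat.cast : ℕ → R) hz
  push_cast at hz'
  have hδ := phi_delta φ hR hup hlo hinv q hq.one_lt.le
    (M := lo y * P) (M' := mk p (q ^ 2 * β) c (w + y * β)
      (by linear_combination hd + β * hy))
    (by rw [mul_00]; simp [lo, h0]) (by rw [mul_01]; simp [lo, β])
    (by rw [mul_10]; simp only [lo, mk_10, mk_11, h0]; linear_combination hy)
    (by rw [mul_11]; simp only [lo, mk_10, mk_11]; ring) k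
    (by rw [mul_00]; simpa [lo, h0] using hk)
  refine ⟨mk p (-β) (-x) w (by linear_combination hd), rfl, rfl, ?_⟩
  rw [map_mul, hlo, one_mul] at hδ
  rw [← hδ]
  congr 1
  exact phi_congr φ hup hlo rfl ⟨-(z * β), by
    simp only [mk_00, mk_01]; linear_combination -β * hz'⟩

/-- Homomorphisms from `SL₂(R)` to commutative groups which kill the elementary matrices and are
invariant under `SL₂(F)` in the sense of `VirtInv` have an image of bounded exponent. By
`exists_prime_dvd` one may replace the first row by `(p, β)` with a prime `p ≡ 1` modulo `4`; for a
prime `q` with `q² ≡ -1` modulo `p`, `phi_neg` and `phi_sq` then bound the order of the value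
by `2 G(p) G(q)`, whose `l`-part is controlled by the residue classes of `p` and `q`. -/
theorem phi_exponent (hR : IsArith R) : ∃ e : ℕ, 1 ≤ e ∧
    ∀ {A : Type _} [CommGroup A] (φ : SL R →* A), (∀ r, φ (up r) = 1) → (∀ r, φ (lo r) = 1) →
      VirtInv φ → ∀ γ, φ γ ^ e = 1 := by
  obtain ⟨E, G, hE, hG1, hG2, hG3⟩ := hR.exponents
  refine ⟨2 * (E * E), Nat.mul_pos two_pos (Nat.mul_pos hE hE), ?_⟩
  intro A _ φ hup hlo hinv γ
  rw [← orderOf_dvd_iff_pow_eq_one]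
  refine dvd_of_padic (Nat.mul_pos two_pos (Nat.mul_pos hE hE)).ne' fun l hl => ?_
  have : Fact l.Prime := ⟨hl⟩
  obtain ⟨Q, c, hQ, h4, hc4, hcQ, hval⟩ := hG3 l hl
  have hcop : IsCoprime (γ 0 0) (γ 0 1) :=
    ⟨γ 1 1, -γ 1 0, by linear_combination det_eq γ⟩
  obtain ⟨β, p, ⟨e, he⟩, -, hp, -, hpc, ⟨w, hw⟩⟩ := exists_prime_dvd hR hcop Q hQ c hcQ 0
  set P := γ * up e * lo w with hP
  have hPγ : φ P = φ γ := by rw [hP, map_mul, map_mul, hup, hlo, mul_one, mul_one]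
  have e01 : (γ * up e) 0 1 = β := by
    rw [mul_01]; simp only [up, mk_01, mk_11]; linear_combination -he
  have hP00 : P 0 0 = p := by
    rw [hP, mul_00, e01, mul_00]
    simp only [up, lo, mk_00, mk_10]
    linear_combination -hw
  have hP01 : P 0 1 = β := by rw [hP, mul_01, e01]; simp [lo]
  have : Fact p.Prime := ⟨hp⟩
  have hp4 : p ≡ 1 [MOD 4] := (hpc.of_dvd h4).trans hc4
  obtain ⟨i, hi⟩ : IsSquare (-1 : ZMod p) := ZMod.exists_sq_eq_neg_one_iff.2 (by
    have : p % 4 = 1 := hp4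
    omega)
  have hpQ : p.Coprime Q := by rw [Nat.Coprime, hpc.gcd_eq]; exact hcQ
  obtain ⟨r, hr1, hr2⟩ := Nat.chineseRemainder hpQ i.val c
  have hri : ((r : ℕ) : ZMod p) = i := by
    rw [(ZMod.natCast_eq_natCast_iff _ _ _).2 hr1, ZMod.natCast_zmod_val]
  have hrc : r.Coprime (p * Q) := by
    refine Nat.Coprime.mul_right ?_ (by rw [Nat.Coprime, hr2.gcd_eq]; exact hcQ)
    rw [Nat.coprime_comm, Nat.Prime.coprime_iff_not_dvd hp, ← ZMod.natCast_eq_zero_iff, hri]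
    rintro rfl
    simp at hi
  obtain ⟨q, hqp, hq, hqr⟩ := Nat.forall_exists_prime_gt_and_modEq p
    (Nat.mul_pos hp.pos hQ).ne' hrc
  have hqi : p ∣ q ^ 2 + 1 := by
    rw [← ZMod.natCast_eq_zero_iff]
    push_cast
    rw [(ZMod.natCast_eq_natCast_iff _ _ _).2 (hqr.of_mul_right Q), hri, sq, ← hi]
    ring
  have hqc : q ≡ c [MOD Q] := (hqr.of_mul_left p).trans hr2
  have hcop2 : IsCoprime (p : R) (q : R) := by
    have := (Nat.isCoprime_iff_coprime.2 ((Nat.coprime_primes hp hq).2 hqp.ne)).map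
      (Int.castRingHom R)
    simpa using this
  obtain ⟨Pm, hm0, hm1, hm2⟩ := phi_sq φ hR hup hlo hinv p q hp hq hqp.ne hqi P hP00 (G q)
    (hG2 q hq p hcop2)
  have hneg := phi_neg φ hR hup hlo hinv p hp P Pm hP00 hm0 hm1 (G p)
    (hG2 p hp _ ⟨-P 1 0, P 1 1, by have := det_eq P; rw [hP00] at this; linear_combination this⟩)
  have hGp := Nat.one_le_iff_ne_zero.1 (hG1 p hp)
  have hGq := Nat.one_le_iff_ne_zero.1 (hG1 q hq)
  refine ⟨2 * (G p * G q), by positivity, ?_, ?_⟩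
  · rw [orderOf_dvd_iff_pow_eq_one, ← hPγ]
    have h1 : (φ P ^ G p * φ Pm ^ G p) ^ G q = 1 := by rw [hneg, one_pow]
    rw [mul_pow, ← pow_mul, ← pow_mul, mul_comm (G p), pow_mul (φ Pm), hm2, ← pow_mul] at h1
    rw [← h1, two_mul, pow_add, mul_comm (G p)]
  · rw [padicValNat.mul two_ne_zero (Nat.mul_ne_zero hGp hGq), padicValNat.mul hGp hGq,
      padicValNat.mul two_ne_zero (Nat.mul_pos hE hE).ne', padicValNat.mul (by omega) (by omega)]
    exact add_le_add_right (add_le_add (hval p hp hpc) (hval q hq hqc)) _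
end symbol
end SL2U

/-! ### Finiteness of the image -/

namespace SL2U
open Matrix

/-- If `Γ(Y²)` has central image, the center of `π(SL₂(R))` has finite index `v`, and the transfer
shows that `γ ↦ π(γ)ᵛ` is a homomorphism into the center. Its `Y`-th power kills the elementary
matrices, so its image has bounded exponent by `phi_exponent`. Hence `π(Γ(Y²))` is a commutative group
of unitary matrices of bounded exponent, which is finite. -/
theorem ker_finiteIndex {R : Type*} [CommRing R] [IsDomain R] [CharZero R] (hR : IsArith R)
    (t : Rˣ) (ht : ∀ k : ℕ, 1 ≤ k → t ^ k ≠ 1) {n : ℕ} (π : SL R →* unitaryGroup (Fin n) ℂ) :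
    π.ker.FiniteIndex := by
  obtain ⟨Y, hY, hup, hlo, hcen⟩ := exists_central hR π t ht
  have := hR.finite_quot (Y ^ 2) (Nat.pow_pos hY)
  have hfi := Gam_finiteIndex ((Y ^ 2 : ℕ) : R)
  have hle : Gam ((Y ^ 2 : ℕ) : R) ≤ (Subgroup.center π.range).comap π.rangeRestrict := by
    intro M hM
    rw [Subgroup.mem_comap, Subgroup.mem_center_iff]
    rintro ⟨_, γ, rfl⟩
    exact Subtype.ext (hcen M hM γ).eq.symm
  have hfc : (Subgroup.center π.range).FiniteIndex := by
    constructor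
    rw [← Subgroup.index_comap_of_surjective _ π.rangeRestrict_surjective]
    exact (Subgroup.finiteIndex_of_le hle).index_ne_zero
  obtain ⟨e, he, hexp⟩ := phi_exponent hR
  let _ : CommGroup (Subgroup.center π.range) :=
    { (inferInstance : Group (Subgroup.center π.range)) with
      mul_comm := fun a b => Subtype.ext (Subgroup.mem_center_iff.1 b.2 a) }
  set φ : SL R →* Subgroup.center π.range :=
    (powMonoidHom Y : Subgroup.center π.range →* Subgroup.center π.range).comp
      ((MonoidHom.transferCenterPow π.range).comp π.rangeRestrict) with hφ
  set v := (Subgroup.center π.range).index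
  have hφv : ∀ γ, ((φ γ : π.range) : unitaryGroup (Fin n) ℂ) = (π γ) ^ (v * Y) := fun γ => by
    simp only [hφ, MonoidHom.comp_apply, powMonoidHom_apply, SubmonoidClass.coe_pow,
      MonoidHom.transferCenterPow_apply, pow_mul]
    rfl
  have hφ1 : ∀ γ, π γ ^ Y = 1 → φ γ = 1 := fun γ h => by
    apply Subtype.ext; apply Subtype.ext
    rw [hφv, mul_comm, pow_mul, h, one_pow]
    rfl
  have huppow : ∀ (r : R) (k : ℕ), up r ^ k = up (k * r) := fun r k => by
    induction k with
    | zero => simp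
    | succ k ih => rw [pow_succ, ih, ← up_add]; congr 1; push_cast; ring
  have hlopow : ∀ (r : R) (k : ℕ), lo r ^ k = lo (k * r) := fun r k => by
    induction k with
    | zero => simp
    | succ k ih => rw [pow_succ, ih, ← lo_add]; congr 1; push_cast; ring
  have hexp' : ∀ γ, π γ ^ (v * Y * e) = 1 := fun γ => by
    have h := hexp φ (fun r => hφ1 _ (by rw [← map_pow, huppow, hup]))
      (fun r => hφ1 _ (by rw [← map_pow, hlopow, hlo]))
      (fun g => by
        obtain ⟨m, hm, h⟩ := mem_virtStab hR π t ht g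
        refine ⟨m, hm, fun M hM M' hM' => ?_⟩
        apply Subtype.ext; apply Subtype.ext
        rw [hφv, hφv, h M hM M' hM']) γ
    rw [pow_mul, ← hφv]
    have h2 := congrArg (fun z : Subgroup.center π.range =>
      ((z : π.range) : unitaryGroup (Fin n) ℂ)) h
    simpa using h2
  have hfinP : Finite ((Gam ((Y ^ 2 : ℕ) : R)).map π) := by
    refine finite_of_comm_of_pow _ ?_ (v * Y * e)
      (Nat.mul_ne_zero (Nat.mul_ne_zero hfc.index_ne_zero (by omega)) (by omega)) ?_
    · rintro _ ⟨x, hx, rfl⟩ _ ⟨y, -, rfl⟩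
      exact (hcen x hx y).eq
    · rintro _ ⟨x, -, rfl⟩
      exact hexp' x
  have hfin2 : Finite (π.comp (Gam ((Y ^ 2 : ℕ) : R)).subtype).range := by
    rwa [MonoidHom.range_comp, Subgroup.range_subtype]
  have h1 : (π.ker.subgroupOf (Gam ((Y ^ 2 : ℕ) : R))).index ≠ 0 := by
    have : π.ker.subgroupOf (Gam ((Y ^ 2 : ℕ) : R)) = (π.comp (Gam ((Y ^ 2 : ℕ) : R)).subtype).ker :=
      rfl
    rw [this, Subgroup.index_ker]
    exact Nat.card_pos.ne'
  constructor
  have h2 := Subgroup.relIndex_mul_index (inf_le_right : π.ker ⊓ Gam ((Y ^ 2 : ℕ) : R) ≤ _)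
  rw [Subgroup.inf_relIndex_right] at h2
  have h3 : (π.ker ⊓ Gam ((Y ^ 2 : ℕ) : R)).index ≠ 0 := by
    rw [← h2]; exact Nat.mul_ne_zero h1 hfi.index_ne_zero
  exact fun h0 => h3 (Nat.eq_zero_of_zero_dvd (h0 ▸ Subgroup.index_dvd_of_le inf_le_left))

end SL2U

theorem finite_dim_unitary_rep_factors_through_finite_quotient
    (K : Type*) [Field K] [NumberField K]
    (B : Subalgebra ℤ K) (hB : (Subalgebra.toSubmodule B).FG)
    [IsFractionRing B K]
    (S : Submonoid B) (hS : (0 : B) ∉ S)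
    (R : Type*) [CommRing R] [IsDomain R] [Algebra B R] [IsLocalization S R]
    (hu : Infinite Rˣ) :
    ∀ (n : ℕ), 1 ≤ n →
      ∀ π : Matrix.SpecialLinearGroup (Fin 2) R →* Matrix.unitaryGroup (Fin n) ℂ,
        π.ker.FiniteIndex := by
  intro n _ π
  obtain ⟨j, hj⟩ := SL2U.exists_injective_to_field B S hS R
  have : CharZero R := by
    refine ⟨fun a b h => ?_⟩
    have h1 := congrArg j h
    rw [map_natCast, map_natCast] at h1
    exact Nat.cast_injective h1
  obtain ⟨t, ht⟩ := SL2U.exists_unit_infinite_order K j hj hu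
  exact SL2U.ker_finiteIndex (SL2U.isArith_of_localization K B hB S hS R) t ht π
end

section
/- For every m ≥ 2 and every ε > 0 there exists δ > 0 such that the following holds: for every infinite field k, every n ≥ 1, and every map φ : PSL_m(k) → U(n) satisfying ‖φ(gh) − φ(g)·φ(h)‖₂ ≤ δ for all g, h ∈ PSL_m(k), one has ‖1 − φ(g)‖₂ ≤ ε for all g ∈ PSL_m(k). -/
/-!
Let `ψ` be the pullback of a `δ`-almost homomorphism to `SL_m(k)`. The set of `g` with `ψ g` close
to `1` is, with errors a fixed multiple of `δ`, a normal subgroup; the proof shows that it contains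
all elementary matrices, and that these generate `SL_m(k)` in boundedly many steps.

* Since `k` is infinite and the unitary group is compact, two torus elements
  `diag(…, a, …, a⁻¹, …)` and `diag(…, b, …, b⁻¹, …)` with `a² ≠ b²` have `ψ`-values within `δ`
  of each other (`exists_infinite_hsNorm_sub_le`). Their quotient `g` satisfies
  `‖1 - ψ g‖₂ ≤ 4δ` (`almostHom_mul_inv`).
* Commutators of such a `g` with arbitrary elements are also close to `1`
  (`almostHom_commutator`), and every elementary matrix in the corresponding position is one of
  them (`exists_transvection_eq_commutator`); hence `‖1 - ψ e‖₂ ≤ 13δ` for every elementary `e`.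
* By Gaussian elimination every element of `SL_m(k)` is a product of `N = 2m²` elementary matrices
  (`mem_elementarySet_pow`), so `‖1 - ψ g‖₂ ≤ (14N + 1)δ` everywhere (`almostHom_pow`).

In particular `δ` can be taken linear in `ε`.
-/

/-- The projective special linear group `PSL_m(k)`: the quotient of `SL_m(k)`
by its center. -/
abbrev PSL (m : ℕ) (k : Type*) [CommRing k] :=
  Matrix.SpecialLinearGroup (Fin m) k ⧸
    Subgroup.center (Matrix.SpecialLinearGroup (Fin m) k)

/-- The normalized Hilbert–Schmidt norm `‖x‖₂ = (Tr(x* x)/n)^{1/2}` on `n × n`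
complex matrices. -/
noncomputable def hsNorm {n : ℕ} (x : Matrix (Fin n) (Fin n) ℂ) : ℝ :=
  Real.sqrt ((Matrix.trace (x.conjTranspose * x)).re / n)

/-! ### The normalized Hilbert–Schmidt norm -/

section HilbertSchmidt
open Matrix
attribute [local instance] Matrix.frobeniusNormedAddCommGroup

/-- `hsNorm` is the Frobenius norm divided by `√n`; this makes the norm axioms available. -/
lemma hsNorm_eq {n : ℕ} (x : Matrix (Fin n) (Fin n) ℂ) : hsNorm x = ‖x‖ / Real.sqrt n := by
  have h : (Matrix.trace (xᴴ * x)).re = ∑ i, ∑ j, ‖x i j‖ ^ (2 : ℝ) := by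
    rw [Finset.sum_comm]
    simp only [Matrix.trace, Matrix.diag, Matrix.mul_apply, Matrix.conjTranspose_apply,
      Complex.re_sum]
    refine Finset.sum_congr rfl fun i _ => Finset.sum_congr rfl fun j _ => ?_
    rw [Real.rpow_two, ← Complex.normSq_eq_norm_sq, Complex.normSq_apply]
    simp
  rw [hsNorm, Real.sqrt_div' _ (Nat.cast_nonneg n), h, Matrix.frobenius_norm_def,
    Real.sqrt_eq_rpow]

lemma hsNorm_add_le {n : ℕ} (x y : Matrix (Fin n) (Fin n) ℂ) :
    hsNorm (x + y) ≤ hsNorm x + hsNorm y := by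
  simp only [hsNorm_eq, ← add_div]
  gcongr
  exact norm_add_le x y

lemma hsNorm_neg {n : ℕ} (x : Matrix (Fin n) (Fin n) ℂ) : hsNorm (-x) = hsNorm x := by
  simp [hsNorm_eq]

lemma hsNorm_sub_comm {n : ℕ} (x y : Matrix (Fin n) (Fin n) ℂ) :
    hsNorm (x - y) = hsNorm (y - x) := by
  rw [← hsNorm_neg, neg_sub]

lemma hsNorm_sub_le {n : ℕ} (x y z : Matrix (Fin n) (Fin n) ℂ) :
    hsNorm (x - z) ≤ hsNorm (x - y) + hsNorm (y - z) := by
  simpa using hsNorm_add_le (x - y) (y - z)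

lemma hsNorm_unitary_mul {n : ℕ} {u : Matrix (Fin n) (Fin n) ℂ}
    (hu : u ∈ unitaryGroup (Fin n) ℂ) (x : Matrix (Fin n) (Fin n) ℂ) :
    hsNorm (u * x) = hsNorm x := by
  have h : uᴴ * u = 1 := Unitary.star_mul_self_of_mem hu
  rw [hsNorm, hsNorm, conjTranspose_mul, Matrix.mul_assoc, ← Matrix.mul_assoc _ _ x, h,
    Matrix.one_mul]

lemma hsNorm_mul_unitary {n : ℕ} {u : Matrix (Fin n) (Fin n) ℂ}
    (hu : u ∈ unitaryGroup (Fin n) ℂ) (x : Matrix (Fin n) (Fin n) ℂ) :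
    hsNorm (x * u) = hsNorm x := by
  have h : u * uᴴ = 1 := Unitary.mul_star_self_of_mem hu
  rw [hsNorm, hsNorm, conjTranspose_mul, Matrix.mul_assoc, Matrix.trace_mul_comm,
    Matrix.mul_assoc, Matrix.mul_assoc, h, Matrix.mul_one]

/-- Pigeonhole from compactness of the unitary group: among infinitely many unitaries, infinitely
many lie within `η` of each other. This is the only place where finiteness of `n` enters. -/
lemma exists_infinite_hsNorm_sub_le {X : Type*} [Infinite X] {n : ℕ} (hn : 1 ≤ n)
    (f : X → Matrix (Fin n) (Fin n) ℂ) (hf : ∀ a, f a ∈ unitaryGroup (Fin n) ℂ) {η : ℝ} (hη : 0 < η) :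
    ∃ S : Set X, S.Infinite ∧ ∀ a ∈ S, ∀ b ∈ S, hsNorm (f a - f b) ≤ η := by
  let _ : NormedSpace ℂ (Matrix (Fin n) (Fin n) ℂ) := Matrix.frobeniusNormedSpace
  have : ProperSpace (Matrix (Fin n) (Fin n) ℂ) := FiniteDimensional.proper ℂ _
  have hsn : 0 < Real.sqrt n := Real.sqrt_pos.2 (by exact_mod_cast hn)
  obtain ⟨t, ht, hcov⟩ := Metric.totallyBounded_iff.1
    (isCompact_closedBall (0 : Matrix (Fin n) (Fin n) ℂ)
      (Real.sqrt n * hsNorm (1 : Matrix (Fin n) (Fin n) ℂ))).totallyBounded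
    (Real.sqrt n * (η / 2)) (by positivity)
  have hmem : ∀ a, ∃ y ∈ t, f a ∈ Metric.ball y (Real.sqrt n * (η / 2)) := by
    intro a
    have h1 := hsNorm_unitary_mul (hf a) 1
    rw [Matrix.mul_one] at h1
    have : f a ∈ Metric.closedBall (0 : Matrix (Fin n) (Fin n) ℂ)
        (Real.sqrt n * hsNorm (1 : Matrix (Fin n) (Fin n) ℂ)) := by
      rw [mem_closedBall_zero_iff, ← h1, hsNorm_eq]
      field_simp
      exact le_rfl
    simpa using hcov this
  choose c hct hc using hmem
  have := ht.to_subtype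
  obtain ⟨y, hy⟩ := Finite.exists_infinite_fiber (fun a => (⟨c a, hct a⟩ : t))
  refine ⟨_, Set.infinite_coe_iff.1 hy, fun a ha b hb => ?_⟩
  have ha' : c a = y := congrArg Subtype.val ha
  have hb' : c b = y := congrArg Subtype.val hb
  have h1 := hc a
  have h2 := hc b
  rw [ha', mem_ball_iff_norm] at h1
  rw [hb', mem_ball_iff_norm] at h2
  have h3 := norm_sub_le (f a - y) (f b - y)
  rw [sub_sub_sub_cancel_right] at h3
  rw [hsNorm_eq, div_le_iff₀ hsn]
  linarith
end HilbertSchmidt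

/-! ### Almost homomorphisms of an abstract group -/

section AlmostHom
open Matrix
open scoped Pointwise
variable {G : Type*} [Group G] {n : ℕ} {δ : ℝ} {ψ : G → Matrix (Fin n) (Fin n) ℂ}

/-- `ψ` takes unitary values and is multiplicative up to an error `δ` in the normalized
Hilbert–Schmidt norm. It is encoded as a matrix-valued map so that no coercions from the
unitary group appear. -/
def IsAlmostHom (δ : ℝ) (ψ : G → Matrix (Fin n) (Fin n) ℂ) : Prop :=
  (∀ g, ψ g ∈ unitaryGroup (Fin n) ℂ) ∧ ∀ g h, hsNorm (ψ (g * h) - ψ g * ψ h) ≤ δ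

lemma almostHom_mul (hψ : IsAlmostHom δ ψ) (g h : G) :
    hsNorm (1 - ψ (g * h)) ≤ hsNorm (1 - ψ g) + hsNorm (1 - ψ h) + δ := by
  have h1 := hsNorm_sub_le 1 (ψ g) (ψ (g * h))
  have h2 := hsNorm_sub_le (ψ g) (ψ g * ψ h) (ψ (g * h))
  have h3 := hsNorm_unitary_mul (hψ.1 g) (1 - ψ h)
  rw [mul_sub, mul_one] at h3
  have h4 := hψ.2 g h
  rw [hsNorm_sub_comm] at h4
  linarith

lemma almostHom_one (hψ : IsAlmostHom δ ψ) : hsNorm (1 - ψ 1) ≤ δ := by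
  have h3 := hsNorm_unitary_mul (hψ.1 1) (1 - ψ 1)
  rw [mul_sub, mul_one] at h3
  have h4 := hψ.2 1 1
  rw [mul_one] at h4
  linarith

/-- If `ψ a` and `ψ b` are close, then `ψ (a * b⁻¹)` is close to `1`: compare it with `ψ a * ψ b⁻¹`,
then `ψ b * ψ b⁻¹`, then `ψ 1`. -/
lemma almostHom_mul_inv (hψ : IsAlmostHom δ ψ) (a b : G) :
    hsNorm (1 - ψ (a * b⁻¹)) ≤ hsNorm (ψ a - ψ b) + 3 * δ := by
  have h0 := almostHom_one hψ
  have h1 := hψ.2 a b⁻¹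
  have h2 := hψ.2 b b⁻¹
  rw [mul_inv_cancel] at h2
  have h3 := hsNorm_mul_unitary (hψ.1 b⁻¹) (ψ a - ψ b)
  rw [sub_mul] at h3
  have h4 := hsNorm_sub_le 1 (ψ 1) (ψ (a * b⁻¹))
  have h5 := hsNorm_sub_le (ψ 1) (ψ b * ψ b⁻¹) (ψ (a * b⁻¹))
  have h6 := hsNorm_sub_le (ψ b * ψ b⁻¹) (ψ a * ψ b⁻¹) (ψ (a * b⁻¹))
  rw [hsNorm_sub_comm] at h1 h3
  linarith

/-- If `ψ g` is close to `1`, then so is `ψ` of the commutator of `g` with *any* `h`: both `ψ (g * h)`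
and `ψ (h * g)` are close to `ψ h`. -/
lemma almostHom_commutator (hψ : IsAlmostHom δ ψ) (g h : G) :
    hsNorm (1 - ψ (g * h * g⁻¹ * h⁻¹)) ≤ 2 * hsNorm (1 - ψ g) + 5 * δ := by
  have h1 := almostHom_mul_inv hψ (g * h) (h * g)
  have h2 : g * h * (h * g)⁻¹ = g * h * g⁻¹ * h⁻¹ := by group
  rw [h2] at h1
  have h3 := hsNorm_sub_le (ψ (g * h)) (ψ g * ψ h) (ψ (h * g))
  have h4 := hsNorm_sub_le (ψ g * ψ h) (ψ h) (ψ (h * g))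
  have h5 := hsNorm_sub_le (ψ h) (ψ h * ψ g) (ψ (h * g))
  have h6 := hsNorm_mul_unitary (hψ.1 h) (1 - ψ g)
  have h7 := hsNorm_unitary_mul (hψ.1 h) (1 - ψ g)
  rw [sub_mul, one_mul, hsNorm_sub_comm] at h6
  rw [mul_sub, mul_one] at h7
  have h8 := hψ.2 g h
  have h9 := hψ.2 h g
  rw [hsNorm_sub_comm] at h9
  linarith

lemma almostHom_pow (hψ : IsAlmostHom δ ψ) (T : Set G) (C : ℝ)
    (hT : ∀ g ∈ T, hsNorm (1 - ψ g) ≤ C) (N : ℕ) :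
    ∀ g ∈ T ^ N, hsNorm (1 - ψ g) ≤ N * (C + δ) + δ := by
  induction N with
  | zero =>
    intro g hg
    rw [pow_zero, Set.mem_one] at hg
    subst hg
    simpa using almostHom_one hψ
  | succ N ih =>
    intro g hg
    rw [pow_succ] at hg
    obtain ⟨a, ha, b, hb, rfl⟩ := Set.mem_mul.1 hg
    have := almostHom_mul hψ a b
    have := ih a ha
    have := hT b hb
    push_cast
    linarith
end AlmostHom

/-! ### Bounded generation by elementary matrices, and commutators with the torus -/

section Elementary
open Matrix SpecialLinearGroup
open scoped Pointwise
variable {ι k : Type*} [DecidableEq ι] [Fintype ι] [Field k]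

/-- The set of elementary matrices `1 + c E_{ij}`, `i ≠ j`, in `SL_ι(k)`. -/
def elementarySet (ι k : Type*) [DecidableEq ι] [Fintype ι] [Field k] :
    Set (SpecialLinearGroup ι k) :=
  {g | ∃ (i j : ι) (h : i ≠ j) (c : k), g = SpecialLinearGroup.transvection h c}

lemma one_mem_elementarySet [Nontrivial ι] : 1 ∈ elementarySet ι k := by
  obtain ⟨i, j, h⟩ := exists_pair_ne ι
  exact ⟨i, j, h, 0, (transvection_coeff_zero h).symm⟩

lemma transvection_mul_apply {i j : ι} (h : i ≠ j) (c : k) (M : SpecialLinearGroup ι k) (a b : ι) :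
    (SpecialLinearGroup.transvection h c * M) a b = M a b + if a = i then c * M j b else 0 := by
  change (Matrix.transvection i j c * (M : Matrix ι ι k)) a b = _
  split_ifs with hi
  · subst hi; simp
  · simp [hi]

lemma mul_transvection_apply {i j : ι} (h : i ≠ j) (c : k) (M : SpecialLinearGroup ι k) (a b : ι) :
    (M * SpecialLinearGroup.transvection h c) a b = M a b + if b = j then c * M a i else 0 := by
  change ((M : Matrix ι ι k) * Matrix.transvection i j c) a b = _
  split_ifs with hi
  · subst hi; simp
  · simp [hi]

/-- Subtracting `M i j` times row `j` from row `i`, for all `i ∈ s`, takes `s.card` elementary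
factors. -/
lemma exists_clear_rows (j : ι) (M : SpecialLinearGroup ι k) (s : Finset ι) (hs : j ∉ s) :
    ∃ t ∈ elementarySet ι k ^ s.card, ∀ a b,
      (t * M) a b = if a ∈ s then M a b - M a j * M j b else M a b := by
  induction s using Finset.induction_on with
  | empty => exact ⟨1, by simp, by simp⟩
  | insert i s hi ih =>
    rw [Finset.mem_insert, not_or] at hs
    obtain ⟨t, ht, h⟩ := ih hs.2
    refine ⟨transvection (Ne.symm hs.1) (-M i j) * t, ?_, fun a b => ?_⟩
    · rw [Finset.card_insert_of_notMem hi, pow_succ']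
      exact Set.mul_mem_mul ⟨_, _, _, _, rfl⟩ ht
    · rw [mul_assoc, transvection_mul_apply, h, h, if_neg hs.2]
      by_cases hai : a = i
      · subst hai; simp [hi]; ring
      · simp [hai]

/-- Subtracting `M j i` times column `j` from column `i`, for all `i ∈ s`, takes `s.card` elementary
factors. -/
lemma exists_clear_cols (j : ι) (M : SpecialLinearGroup ι k) (s : Finset ι) (hs : j ∉ s) :
    ∃ t ∈ elementarySet ι k ^ s.card, ∀ a b,
      (M * t) a b = if b ∈ s then M a b - M j b * M a j else M a b := by
  induction s using Finset.induction_on with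
  | empty => exact ⟨1, by simp, by simp⟩
  | insert i s hi ih =>
    rw [Finset.mem_insert, not_or] at hs
    obtain ⟨t, ht, h⟩ := ih hs.2
    refine ⟨t * transvection hs.1 (-M j i), ?_, fun a b => ?_⟩
    · rw [Finset.card_insert_of_notMem hi, pow_succ]
      exact Set.mul_mem_mul ht ⟨_, _, _, _, rfl⟩
    · rw [← mul_assoc, mul_transvection_apply, h, h, if_neg hs.2]
      by_cases hai : b = i
      · subst hai; simp [hi]; ring
      · simp [hai]

lemma elementarySet_pow_inv {N : ℕ} {t : SpecialLinearGroup ι k} (ht : t ∈ elementarySet ι k ^ N) :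
    t⁻¹ ∈ elementarySet ι k ^ N := by
  have h : (elementarySet ι k)⁻¹ = elementarySet ι k := by
    refine Set.Subset.antisymm ?_ ?_
    · rintro g ⟨i, j, h, c, hg⟩
      exact ⟨i, j, h, -c, by rw [← transvection_inv, ← hg, inv_inv]⟩
    · rintro g ⟨i, j, h, c, rfl⟩
      exact ⟨i, j, h, -c, transvection_inv h c⟩
  rw [← h, inv_pow]
  simpa using ht

/-- `M` agrees with the identity in the rows and columns indexed by `c`. -/
def IsClearedOn (c : Finset ι) (M : SpecialLinearGroup ι k) : Prop :=
  ∀ a b, a ∈ c ∨ b ∈ c → M a b = (1 : Matrix ι ι k) a b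

lemma IsClearedOn.transvection_mul {c : Finset ι} {M : SpecialLinearGroup ι k}
    (hM : IsClearedOn c M) {i j : ι} (h : i ≠ j) (hi : i ∉ c) (hj : j ∉ c) (x : k) :
    IsClearedOn c (transvection h x * M) := by
  intro a b hab
  rw [transvection_mul_apply, hM a b hab, add_eq_left]
  split_ifs with hai
  · have hb : b ∈ c := hab.resolve_left (hai ▸ hi)
    rw [hM j b (Or.inr hb), one_apply_ne (by rintro rfl; exact hj hb), mul_zero]
  · rfl

/-- As long as some index `i ≠ j` is not yet cleared, two row operations turn the entry at `(j, j)`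
into `1`. -/
lemma exists_pivot {c : Finset ι} {M : SpecialLinearGroup ι k} (hM : IsClearedOn c M) {j i : ι}
    (hj : j ∉ c) (hi : i ∉ c) (hij : i ≠ j) :
    ∃ t ∈ elementarySet ι k ^ 2, IsClearedOn c (t * M) ∧ (t * M) j j = 1 := by
  -- an off-diagonal entry of column `j` can be made nonzero by one operation
  have step : ∃ t ∈ elementarySet ι k, IsClearedOn c (t * M) ∧ ∃ i ∉ c, i ≠ j ∧ (t * M) i j ≠ 0 := by
    by_cases h : ∃ i, i ≠ j ∧ M i j ≠ 0
    · obtain ⟨i', hi', hne⟩ := h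
      refine ⟨1, ⟨i, j, hij, 0, (transvection_coeff_zero hij).symm⟩, by simpa using hM,
        i', fun hc => hne ?_, hi', by simpa using hne⟩
      rw [hM i' j (Or.inl hc), one_apply_ne hi']
    · push Not at h
      have hjj : M j j ≠ 0 := by
        intro h0
        have : (M : Matrix ι ι k).det = 0 := det_eq_zero_of_column_eq_zero j fun a => by
          by_cases ha : a = j
          · subst ha; exact h0
          · exact h a ha
        rw [M.2] at this
        exact one_ne_zero this
      refine ⟨transvection hij 1, ⟨i, j, hij, 1, rfl⟩, hM.transvection_mul hij hi hj 1,
        i, hi, hij, ?_⟩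
      rw [transvection_mul_apply, h i hij]
      simpa using hjj
  obtain ⟨t, ht, hc, i', hi', hij', hne⟩ := step
  refine ⟨transvection hij'.symm ((1 - (t * M) j j) / (t * M) i' j) * t, ?_, ?_, ?_⟩
  · rw [pow_two]
    exact Set.mul_mem_mul ⟨_, _, _, _, rfl⟩ ht
  · rw [mul_assoc]
    exact hc.transvection_mul _ hj hi' _
  · rw [mul_assoc, transvection_mul_apply, if_pos rfl, div_mul_cancel₀ _ hne]
    ring

/-- One elimination step: a boundedly long product of elementary factors clears one more index. -/
lemma exists_clear_index {c : Finset ι} {M : SpecialLinearGroup ι k} (hM : IsClearedOn c M)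
    {j i : ι} (hj : j ∉ c) (hi : i ∉ c) (hij : i ≠ j) :
    ∃ t ∈ elementarySet ι k ^ (Fintype.card ι - 1 + 2),
      ∃ u ∈ elementarySet ι k ^ (Fintype.card ι - 1),
      IsClearedOn (insert j c) (t * M * u) := by
  obtain ⟨t, ht, hc, h1⟩ := exists_pivot hM hj hi hij
  generalize hP : t * M = P at hc h1
  have hs : (Finset.univ.erase j).card = Fintype.card ι - 1 := by
    rw [Finset.card_erase_of_mem (Finset.mem_univ j), Finset.card_univ]
  obtain ⟨t', ht', h2⟩ := exists_clear_rows j P (Finset.univ.erase j) (by simp)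
  obtain ⟨u, hu, h3⟩ := exists_clear_cols j (t' * P) (Finset.univ.erase j) (by simp)
  rw [hs] at ht' hu
  refine ⟨t' * t, by rw [pow_add]; exact Set.mul_mem_mul ht' ht, u, hu, fun a b hab => ?_⟩
  rw [mul_assoc t', hP, h3]
  simp only [h2, Finset.mem_erase, Finset.mem_univ, and_true, ne_eq, not_true_eq_false, if_false,
    Finset.mem_insert, h1, mul_one, sub_self] at hab ⊢
  by_cases ha : a = j
  · subst ha
    by_cases hb : b = a
    · subst hb; simp [h1]
    · simp [hb, h1, one_apply_ne (Ne.symm hb)]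
  · by_cases hb : b = j
    · subst hb
      simp [ha, one_apply_ne ha, h1]
    · simp only [ha, hb, false_or] at hab
      have key : P a j * P j b = 0 := by
        rcases hab with h | h
        · rw [hc a j (Or.inl h), one_apply_ne ha, zero_mul]
        · rw [hc j b (Or.inr h), one_apply_ne (Ne.symm hb), mul_zero]
      simp [ha, hb, key, hc a b hab]

/-- Once at most one index is left uncleared, `M` is diagonal with a single entry possibly different
from `1`, and that entry is `det M = 1`. -/
lemma eq_one_of_isClearedOn {c : Finset ι} {M : SpecialLinearGroup ι k} (hM : IsClearedOn c M)
    (j : ι) (h : ∀ i, i ≠ j → i ∈ c) : M = 1 := by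
  have hoff : ∀ a b, a ≠ j ∨ b ≠ j → M a b = (1 : Matrix ι ι k) a b := fun a b hab =>
    hM a b (hab.imp (h a) (h b))
  have hd : (M : Matrix ι ι k) = diagonal fun a => M a a := by
    ext a b
    by_cases hab : a = b
    · subst hab; simp
    · rw [diagonal_apply_ne _ hab, hoff a b, one_apply_ne hab]
      by_contra! hcon
      exact hab (hcon.1.trans hcon.2.symm)
  have hdet : ∏ a, M a a = 1 := by rw [← det_diagonal, ← hd, M.2]
  rw [Finset.prod_eq_single j (fun a _ ha => by rw [hoff a a (Or.inl ha), one_apply_eq])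
    (by simp)] at hdet
  ext a b
  by_cases hab : a ≠ j ∨ b ≠ j
  · simpa using hoff a b hab
  · push Not at hab
    obtain ⟨rfl, rfl⟩ := hab
    simpa using hdet

/-- Induction on the number of uncleared indices, each of which costs at most
`2 * Fintype.card ι` elementary factors. -/
lemma mem_pow_of_isClearedOn [Nontrivial ι] (d : ℕ) :
    ∀ (c : Finset ι) (M : SpecialLinearGroup ι k), cᶜ.card ≤ d → IsClearedOn c M →
      M ∈ elementarySet ι k ^ (2 * Fintype.card ι * d) := by
  have hpos : 0 < Fintype.card ι := Fintype.card_pos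
  have h1 : (1 : SpecialLinearGroup ι k) ∈ elementarySet ι k := one_mem_elementarySet
  have base : ∀ N : ℕ, (1 : SpecialLinearGroup ι k) ∈ elementarySet ι k ^ N := fun N =>
    Set.one_mem_pow h1
  induction d with
  | zero =>
    intro c M hc hM
    have hc' : c = Finset.univ := by simpa using hc
    obtain ⟨j⟩ : Nonempty ι := inferInstance
    rw [eq_one_of_isClearedOn hM j (by simp [hc'])]
    exact base _
  | succ d ih =>
    intro c M hc hM
    by_cases hex : ∃ i j, i ∉ c ∧ j ∉ c ∧ i ≠ j
    · obtain ⟨i, j, hi, hj, hij⟩ := hex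
      obtain ⟨t, ht, u, hu, htu⟩ := exists_clear_index hM hj hi hij
      have hlt : (insert j c)ᶜ.card < cᶜ.card := by
        apply Finset.card_lt_card
        rw [Finset.compl_ssubset_compl]
        exact Finset.ssubset_insert hj
      have h := ih _ _ (by omega) htu
      have hM' : M = t⁻¹ * (t * M * u) * u⁻¹ := by group
      rw [hM', show 2 * Fintype.card ι * (d + 1) = (Fintype.card ι - 1 + 2) +
        2 * Fintype.card ι * d + (Fintype.card ι - 1) by rw [mul_add]; omega, pow_add, pow_add]
      exact Set.mul_mem_mul (Set.mul_mem_mul (elementarySet_pow_inv ht) h)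
        (elementarySet_pow_inv hu)
    · push Not at hex
      obtain ⟨j, hj⟩ : ∃ j : ι, ∀ i, i ≠ j → i ∈ c := by
        by_cases hcu : ∃ j, j ∉ c
        · obtain ⟨j, hj⟩ := hcu
          exact ⟨j, fun i hij => by_contra fun hi => hij (hex i j hi hj)⟩
        · push Not at hcu
          exact ⟨Classical.arbitrary ι, fun i _ => hcu i⟩
      rw [eq_one_of_isClearedOn hM j hj]
      exact base _

/-- Bounded generation: the number of elementary factors needed depends only on the size of the
matrices, not on the field. -/
lemma mem_elementarySet_pow [Nontrivial ι] (M : SpecialLinearGroup ι k) :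
    M ∈ elementarySet ι k ^ (2 * Fintype.card ι * Fintype.card ι) :=
  mem_pow_of_isClearedOn _ ∅ M (by simp) (by intro a b h; simp at h)

/-- The diagonal matrix with `a` at `i`, `a⁻¹` at `j` and `1` elsewhere. -/
def torusElt {i j : ι} (h : i ≠ j) (a : kˣ) : SpecialLinearGroup ι k :=
  ⟨diagonal (Function.update (Function.update (fun _ => 1) i (a : k)) j (a⁻¹ : kˣ)), by
    rw [det_diagonal, Finset.prod_update_of_mem (Finset.mem_univ j),
      Finset.prod_update_of_mem (by simpa using h)]
    simp⟩

lemma torusElt_mul_transvection {i j : ι} (h : i ≠ j) (a : kˣ) (c : k) :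
    torusElt h a * transvection h c = transvection h (a ^ 2 * c) * torusElt h a := by
  apply Subtype.ext
  change diagonal _ * Matrix.transvection i j c = Matrix.transvection i j _ * diagonal _
  rw [Matrix.transvection, Matrix.transvection, mul_add, add_mul, mul_one, one_mul, add_right_inj]
  ext p q
  rw [diagonal_mul, mul_diagonal, single_apply, single_apply]
  split_ifs with hpq
  · obtain ⟨rfl, rfl⟩ := hpq
    simp [Function.update_of_ne h]
    field_simp
  · simp

/-- Conjugation by `torusElt h a * (torusElt h b)⁻¹` scales the parameter of `transvection h` by
`a ^ 2 / b ^ 2 ≠ 1`, so every `transvection h c` is a commutator with this torus element. -/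
lemma exists_transvection_eq_commutator {i j : ι} (h : i ≠ j) {a b : kˣ}
    (hab : (a : k) ^ 2 ≠ (b : k) ^ 2) (c : k) :
    ∃ e : SpecialLinearGroup ι k, transvection h c =
      (torusElt h a * (torusElt h b)⁻¹) * e * (torusElt h a * (torusElt h b)⁻¹)⁻¹ * e⁻¹ := by
  have hne : (a : k) ^ 2 - (b : k) ^ 2 ≠ 0 := sub_ne_zero.2 hab
  set y : k := c / ((a : k) ^ 2 - (b : k) ^ 2) with hy
  have hc : c + (b : k) ^ 2 * y = (a : k) ^ 2 * y := by rw [hy]; field_simp; ring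
  refine ⟨transvection h ((b : k) ^ 2 * y), ?_⟩
  have hb := torusElt_mul_transvection h b y
  have ha := torusElt_mul_transvection h a y
  rw [eq_mul_inv_iff_mul_eq, eq_mul_inv_iff_mul_eq, ← transvection_add, hc]
  rw [← mul_assoc, ← ha, mul_assoc (torusElt h a), mul_assoc (torusElt h a)]
  rw [mul_right_inj, eq_inv_mul_iff_mul_eq, ← mul_assoc, hb, mul_inv_cancel_right]
end Elementary

/-! ### The conclusion -/

section Main
open Matrix SpecialLinearGroup
open scoped Pointwise

lemma infinite_units (k : Type*) [Field k] [Infinite k] : Infinite kˣ := by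
  have h : ({0}ᶜ : Set k).Infinite := (Set.finite_singleton 0).infinite_compl
  have := h.to_subtype
  exact Infinite.of_injective (fun x : ({0}ᶜ : Set k) => Units.mk0 x.1 x.2)
    fun x y hxy => Subtype.ext (congrArg Units.val hxy)

/-- Every elementary matrix is almost killed, with a constant independent of `k` and `n`. -/
lemma hsNorm_one_sub_transvection_le {ι k : Type*} [DecidableEq ι] [Fintype ι] [Field k]
    [Infinite k] {n : ℕ} (hn : 1 ≤ n) {δ : ℝ} (hδ : 0 < δ)
    {ψ : SpecialLinearGroup ι k → Matrix (Fin n) (Fin n) ℂ} (hψ : IsAlmostHom δ ψ)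
    {i j : ι} (h : i ≠ j) (c : k) : hsNorm (1 - ψ (transvection h c)) ≤ 13 * δ := by
  classical
  have := infinite_units k
  obtain ⟨S, hS, hd⟩ := exists_infinite_hsNorm_sub_le hn (fun a : kˣ => ψ (torusElt h a))
    (fun a => hψ.1 _) hδ
  obtain ⟨a, ha⟩ := hS.nonempty
  obtain ⟨b, hb, hbn⟩ := hS.exists_notMem_finset {a, -a}
  have hab : (a : k) ^ 2 ≠ (b : k) ^ 2 := by
    intro hsq
    apply hbn
    rcases sq_eq_sq_iff_eq_or_eq_neg.1 hsq.symm with h1 | h1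
    · simp [Units.ext h1]
    · have h2 : b = -a := Units.ext (by simpa using h1)
      simp [h2]
  obtain ⟨e, he⟩ := exists_transvection_eq_commutator h hab c
  have h1 := almostHom_mul_inv hψ (torusElt h a) (torusElt h b)
  have h2 := almostHom_commutator hψ (torusElt h a * (torusElt h b)⁻¹) e
  have h3 := hd a ha b hb
  rw [he]
  linarith
end Main

theorem almost_homomorphisms_of_PSL_are_almost_trivial
    (m : ℕ) (hm : 2 ≤ m) (ε : ℝ) (hε : 0 < ε) :
    ∃ δ : ℝ, 0 < δ ∧
      ∀ (k : Type) [Field k] [Infinite k],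
        ∀ (n : ℕ), 1 ≤ n →
          ∀ φ : PSL m k → Matrix.unitaryGroup (Fin n) ℂ,
            (∀ g h : PSL m k,
              hsNorm ((φ (g * h) : Matrix (Fin n) (Fin n) ℂ)
                - (φ g : Matrix (Fin n) (Fin n) ℂ) * (φ h : Matrix (Fin n) (Fin n) ℂ)) ≤ δ) →
            ∀ g : PSL m k,
              hsNorm (1 - (φ g : Matrix (Fin n) (Fin n) ℂ)) ≤ ε := by
  have : Nontrivial (Fin m) := Fin.nontrivial_iff_two_le.2 hm
  set N : ℕ := 2 * Fintype.card (Fin m) * Fintype.card (Fin m) with hN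
  have hpos : (0 : ℝ) < N * 14 + 1 := by positivity
  have hδ : 0 < ε / (N * 14 + 1) := div_pos hε hpos
  refine ⟨ε / (N * 14 + 1), hδ, fun k _ _ n hn φ hφ g => ?_⟩
  obtain ⟨M, rfl⟩ := QuotientGroup.mk_surjective g
  have hψ : IsAlmostHom (ε / (N * 14 + 1)) (fun M : Matrix.SpecialLinearGroup (Fin m) k =>
      (φ (QuotientGroup.mk M) : Matrix (Fin n) (Fin n) ℂ)) :=
    ⟨fun M => (φ _).2, fun A B => hφ (QuotientGroup.mk A) (QuotientGroup.mk B)⟩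
  refine (almostHom_pow hψ (elementarySet (Fin m) k) (13 * (ε / (N * 14 + 1))) ?_ N M
    (mem_elementarySet_pow M)).trans (le_of_eq ?_)
  · rintro _ ⟨i, j, h, c, rfl⟩
    exact hsNorm_one_sub_transvection_le hn hδ hψ h c
  · field_simp
    ring
end

section
/- Let m ≥ 2 and let k be an infinite field. Then for every n ≥ 1, every group homomorphism π : SL_m(k) → U(n) into the group of n×n complex unitary matrices is trivial, i.e. π(g) = 1 for all g ∈ SL_m(k). In particular, SL_m(k) admits no non-trivial finite-dimensional unitary representations. -/
/-!
The argument uses only that `U(n)` is bounded in a finite-dimensional C⋆-algebra, hence totally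
bounded for the (bi-invariant) operator norm.

Fix `i ≠ j` and write `e(c)` for the transvection `1 + c E_ij` and `h(t)` for the diagonal matrix
with entries `t`, `t⁻¹` at `i`, `j` and `1` elsewhere, so that `h(t) e(c) h(t)⁻¹ = e(t² c)`.
Given `ε > 0`, since `k` is infinite, the pigeonhole principle gives units `a`, `b` with `a² ≠ b²`
and `‖π(h(a)) - π(h(b))‖ < ε`. Conjugating the unitary `π(e(c))` by these two nearby unitaries shows
that `π(e(a² c))` and `π(e(b² c))` are at distance at most `2 ε`, that is, `π(e((a² - b²) c))` is
within `2 ε` of `1`, uniformly in `c`. As `(a² - b²) c` runs through all of `k`, every `π(e(d))` is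
within `2 ε` of `1` for every `ε`, so it equals `1` (`map_transvection_eq_one`). Finally `SL_m(k)`
is generated by transvections (`eq_top_of_transvection_mem`).
-/

open Matrix

section Norm

open scoped Matrix.Norms.L2Operator

/-- Conjugation by unitaries is uniformly Lipschitz in the conjugating element: the bound does not
depend on the unitary `u` being conjugated. -/
lemma norm_unitary_conj_sub_le {n : ℕ} (x y u : Matrix.unitaryGroup (Fin n) ℂ) :
    ‖((x * u * x⁻¹ * (y * u * y⁻¹)⁻¹ : Matrix.unitaryGroup (Fin n) ℂ) :
      Matrix (Fin n) (Fin n) ℂ) - 1‖ ≤ 2 * ‖(x : Matrix (Fin n) (Fin n) ℂ) - y‖ := by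
  have key : ∀ p q : Matrix.unitaryGroup (Fin n) ℂ,
      ‖((p * q⁻¹ : Matrix.unitaryGroup (Fin n) ℂ) : Matrix (Fin n) (Fin n) ℂ) - 1‖ =
        ‖(p : Matrix (Fin n) (Fin n) ℂ) - q‖ := by
    intro p q
    rw [← CStarRing.norm_mul_coe_unitary _ q, sub_mul, one_mul]
    congr 2
    exact congrArg Subtype.val (inv_mul_cancel_right p q)
  rw [key]
  have hx : ‖((x⁻¹ : Matrix.unitaryGroup (Fin n) ℂ) : Matrix (Fin n) (Fin n) ℂ) -
      ((y⁻¹ : Matrix.unitaryGroup (Fin n) ℂ) : Matrix (Fin n) (Fin n) ℂ)‖ =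
      ‖(x : Matrix (Fin n) (Fin n) ℂ) - y‖ := by
    change ‖star (x : Matrix (Fin n) (Fin n) ℂ) - star (y : Matrix (Fin n) (Fin n) ℂ)‖ = _
    rw [← star_sub, norm_star]
  have hsplit : ((x * u * x⁻¹ : Matrix.unitaryGroup (Fin n) ℂ) : Matrix (Fin n) (Fin n) ℂ) -
      ((y * u * y⁻¹ : Matrix.unitaryGroup (Fin n) ℂ) : Matrix (Fin n) (Fin n) ℂ) =
      ((x : Matrix (Fin n) (Fin n) ℂ) - y) *
        ((u * x⁻¹ : Matrix.unitaryGroup (Fin n) ℂ) : Matrix (Fin n) (Fin n) ℂ) +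
      ((y * u : Matrix.unitaryGroup (Fin n) ℂ) : Matrix (Fin n) (Fin n) ℂ) *
        (((x⁻¹ : Matrix.unitaryGroup (Fin n) ℂ) : Matrix (Fin n) (Fin n) ℂ) -
        ((y⁻¹ : Matrix.unitaryGroup (Fin n) ℂ) : Matrix (Fin n) (Fin n) ℂ)) := by
    simp only [Submonoid.coe_mul]
    noncomm_ring
  rw [hsplit]
  refine (norm_add_le _ _).trans ?_
  rw [CStarRing.norm_mul_coe_unitary, CStarRing.norm_coe_unitary_mul, hx, two_mul]

/-- Total boundedness of the unitary group, as a pigeonhole principle: among infinitely many units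
of a field, two with different squares have nearby images in `U(n)`. -/
lemma exists_sq_ne_norm_sub_lt {k : Type*} [Field k] [Infinite k] {n : ℕ}
    (f : kˣ → Matrix.unitaryGroup (Fin n) ℂ) {ε : ℝ} (hε : 0 < ε) :
    ∃ a b : kˣ, (a : k) ^ 2 ≠ (b : k) ^ 2 ∧
      ‖(f a : Matrix (Fin n) (Fin n) ℂ) - f b‖ < ε := by
  have : ProperSpace (Matrix (Fin n) (Fin n) ℂ) := FiniteDimensional.proper ℂ _
  have : Infinite kˣ := by
    have h : ({0}ᶜ : Set k).Infinite := (Set.finite_singleton 0).infinite_compl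
    have := h.to_subtype
    exact Infinite.of_injective (fun x : ({0}ᶜ : Set k) ↦ Units.mk0 x.1 x.2)
      fun x y hxy ↦ Subtype.ext (congrArg Units.val hxy)
  have htb := (isCompact_closedBall (0 : Matrix (Fin n) (Fin n) ℂ)
    ‖(1 : Matrix (Fin n) (Fin n) ℂ)‖).totallyBounded
  obtain ⟨s, hs, hcov⟩ := Metric.totallyBounded_iff.1 htb (ε / 2) (by positivity)
  have hmem : ∀ a, ∃ c : s, ‖(f a : Matrix (Fin n) (Fin n) ℂ) - c‖ < ε / 2 := by
    intro a
    have h : (f a : Matrix (Fin n) (Fin n) ℂ) ∈ Metric.closedBall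
        (0 : Matrix (Fin n) (Fin n) ℂ) ‖(1 : Matrix (Fin n) (Fin n) ℂ)‖ := by
      rw [mem_closedBall_zero_iff, ← one_mul (f a : Matrix (Fin n) (Fin n) ℂ),
        CStarRing.norm_mul_coe_unitary]
    obtain ⟨c, hc, hc'⟩ := Set.mem_iUnion₂.1 (hcov h)
    exact ⟨⟨c, hc⟩, by simpa [dist_eq_norm] using hc'⟩
  choose c hc using hmem
  have := hs.to_subtype
  obtain ⟨y, hy⟩ := Finite.exists_infinite_fiber c
  have hinf : (c ⁻¹' {y}).Infinite := Set.infinite_coe_iff.1 hy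
  obtain ⟨b, hb⟩ := hinf.nonempty
  obtain ⟨a, ha, hab⟩ := (hinf.sdiff (Set.toFinite {b, -b})).nonempty
  refine ⟨a, b, fun h ↦ hab ?_, ?_⟩
  · rcases sq_eq_sq_iff_eq_or_eq_neg.1 h with h | h
    · exact Or.inl (Units.ext h)
    · exact Or.inr (Units.ext h)
  · have h1 := hc a
    have h2 := hc b
    rw [show c a = y from ha] at h1
    rw [show c b = y from hb, norm_sub_rev] at h2
    linarith [norm_sub_le_norm_sub_add_norm_sub (f a : Matrix (Fin n) (Fin n) ℂ) y (f b)]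

end Norm

section SL

variable {ι k : Type*} [Fintype ι] [DecidableEq ι] [Field k]

/-- The diagonal matrix of determinant one with entry `t` at `i`, `t⁻¹` at `j` and `1` elsewhere. -/
def slTorus {i j : ι} (hij : i ≠ j) (t : kˣ) : SpecialLinearGroup ι k :=
  ⟨diagonal (Function.update (Function.update 1 i (t : k)) j (t : k)⁻¹), by
    rw [det_diagonal, Finset.prod_update_of_mem (Finset.mem_univ _),
      Finset.prod_update_of_mem (by simp [hij])]
    simp⟩

lemma slTorus_conj_transvection {i j : ι} (hij : i ≠ j) (t : kˣ) (c : k) :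
    slTorus hij t * SpecialLinearGroup.transvection hij c * (slTorus hij t)⁻¹ =
      SpecialLinearGroup.transvection hij ((t : k) ^ 2 * c) := by
  rw [mul_inv_eq_iff_eq_mul]
  apply Subtype.ext
  change diagonal _ * (1 + single i j c) = (1 + single i j ((t : k) ^ 2 * c)) * diagonal _
  have ht := t.ne_zero
  rw [mul_add, add_mul, mul_one, one_mul]
  congr 1
  ext a b
  rw [diagonal_mul, mul_diagonal]
  by_cases h : i = a ∧ j = b
  · obtain ⟨rfl, rfl⟩ := h
    simp [hij]
    field_simp
  · rw [single_apply, single_apply, if_neg h, if_neg h, mul_zero, zero_mul]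

/-- The factorization `h(t) = w(t) w(-1)` of a torus element into transvections, where
`w(t) = e(t) f(-t⁻¹) e(t)` with `e(c) = 1 + c E_ij` and `f(c) = 1 + c E_ji`. -/
lemma slTorus_eq_prod {i j : ι} (hij : i ≠ j) (t : kˣ) :
    slTorus hij t =
      (SpecialLinearGroup.transvection hij (t : k) *
        SpecialLinearGroup.transvection hij.symm (-(t : k)⁻¹) *
        SpecialLinearGroup.transvection hij (t : k)) *
      (SpecialLinearGroup.transvection hij (-1) *
        SpecialLinearGroup.transvection hij.symm 1 *
        SpecialLinearGroup.transvection hij (-1)) := by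
  have ht := t.ne_zero
  apply Subtype.ext
  change diagonal _ = ((1 + single i j (t : k)) * (1 + single j i (-(t : k)⁻¹)) *
    (1 + single i j (t : k))) * ((1 + single i j (-1)) * (1 + single j i 1) * (1 + single i j (-1)))
  simp only [mul_add, add_mul, mul_one, one_mul, single_mul_single_same, ne_eq, hij, hij.symm,
    not_false_eq_true, single_mul_single_of_ne, add_zero]
  ext a b
  by_cases ai : i = a <;> by_cases aj : j = a <;> by_cases bi : i = b <;> by_cases bj : j = b <;>
    simp_all [diagonal_apply, one_apply, eq_comm]

/-- A subgroup containing all transvections contains the diagonal matrices of determinant one, since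
these are products of torus elements `slTorus`. The induction is on a set `s` of places, other than
`i₀`, outside which all entries are `1`: multiplying by a torus element moves the entry at one
place of `s` to `i₀`. -/
lemma diagonal_mem_of_transvection_mem (N : Subgroup (SpecialLinearGroup ι k))
    (hN : ∀ (i j : ι) (hij : i ≠ j) (c : k), SpecialLinearGroup.transvection hij c ∈ N) (i₀ : ι)
    (s : Finset ι) (hs : i₀ ∉ s) : ∀ (D : ι → k) (hD : (diagonal D).det = 1),
      (∀ i, i ∉ s → i ≠ i₀ → D i = 1) → (⟨diagonal D, hD⟩ : SpecialLinearGroup ι k) ∈ N := by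
  induction s using Finset.induction_on with
  | empty =>
    intro D hD h
    have h0 : D = 1 := by
      funext i
      by_cases hi : i = i₀
      · rw [det_diagonal, Finset.prod_eq_single i₀ (fun b _ hb ↦ h b (by simp) hb) (by simp)] at hD
        simpa [hi] using hD
      · exact h i (by simp) hi
    have h1 : (⟨diagonal D, hD⟩ : SpecialLinearGroup ι k) = (1 : SpecialLinearGroup ι k) := by
      apply Subtype.ext
      change diagonal D = 1
      rw [h0]
      exact diagonal_one
    rw [h1]
    exact N.one_mem
  | insert a s ha ih =>
    intro D hD h
    have hai : a ≠ i₀ := fun h ↦ hs (by simp [h])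
    have hDa : D a ≠ 0 := fun h0 ↦ by
      rw [det_diagonal, Finset.prod_eq_zero (Finset.mem_univ a) h0] at hD
      exact zero_ne_one hD
    have hT : slTorus hai (Units.mk0 (D a) hDa) ∈ N := by
      rw [slTorus_eq_prod]
      exact N.mul_mem (N.mul_mem (N.mul_mem (hN ..) (hN ..)) (hN ..))
        (N.mul_mem (N.mul_mem (hN ..) (hN ..)) (hN ..))
    have hmul : diagonal D = (slTorus hai (Units.mk0 (D a) hDa)).1 *
        diagonal (Function.update (Function.update D a 1) i₀ (D a * D i₀)) := by
      simp only [slTorus, diagonal_mul_diagonal]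
      congr 1
      funext i
      by_cases h1 : i = i₀
      · subst h1; simp [hDa]
      · by_cases h2 : i = a
        · subst h2; simp [h1]
        · simp [h1, h2]
    have hdet : (diagonal (Function.update (Function.update D a 1) i₀ (D a * D i₀))).det = 1 := by
      have := congrArg det hmul
      rw [det_mul, hD, (slTorus hai (Units.mk0 (D a) hDa)).2, one_mul] at this
      exact this.symm
    have hmem := N.mul_mem hT (ih (fun h ↦ hs (by simp [h])) _ hdet fun i hi hi0 ↦ by
      by_cases h2 : i = a
      · subst h2; simp [hi0]
      · simpa [hi0, h2] using h i (by simp [h2, hi]) hi0)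
    have heq : (⟨diagonal D, hD⟩ : SpecialLinearGroup ι k) =
        slTorus hai (Units.mk0 (D a) hDa) * ⟨_, hdet⟩ := Subtype.ext hmul
    rw [heq]
    exact hmem

/-- The special linear group over a field is generated by transvections. -/
lemma eq_top_of_transvection_mem (N : Subgroup (SpecialLinearGroup ι k))
    (hN : ∀ (i j : ι) (hij : i ≠ j) (c : k), SpecialLinearGroup.transvection hij c ∈ N)
    (i₀ : ι) : N = ⊤ := by
  rw [Subgroup.eq_top_iff']
  intro g
  have key : ∃ h : g.1.det = 1, (⟨g.1, h⟩ : SpecialLinearGroup ι k) ∈ N := by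
    refine diagonal_transvection_induction (fun M ↦ ∃ h : M.det = 1,
      (⟨M, h⟩ : SpecialLinearGroup ι k) ∈ N) g.1 ?_ ?_ ?_
    · intro D hD
      rw [g.2] at hD
      exact ⟨hD, diagonal_mem_of_transvection_mem N hN i₀ (Finset.univ.erase i₀) (by simp) D hD
        fun i hi hi0 ↦ absurd hi (by simp [hi0])⟩
    · rintro ⟨i, j, hij, c⟩
      exact ⟨det_transvection_of_ne i j hij c, hN i j hij c⟩
    · rintro A B ⟨hA, hA'⟩ ⟨hB, hB'⟩
      exact ⟨by rw [det_mul, hA, hB, one_mul], N.mul_mem hA' hB'⟩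
  exact key.2

open scoped Matrix.Norms.L2Operator in
/-- The heart of the argument: over an infinite field, transvections act trivially in every
finite-dimensional unitary representation of the special linear group. -/
lemma map_transvection_eq_one [Infinite k] {n : ℕ}
    (π : SpecialLinearGroup ι k →* Matrix.unitaryGroup (Fin n) ℂ) {i j : ι} (hij : i ≠ j) (d : k) :
    π (SpecialLinearGroup.transvection hij d) = 1 := by
  apply Subtype.ext
  refine sub_eq_zero.1 (norm_le_zero_iff.1 (le_of_forall_pos_le_add fun ε hε ↦ ?_))
  obtain ⟨a, b, hab, hlt⟩ :=
    exists_sq_ne_norm_sub_lt (fun t : kˣ ↦ π (slTorus hij t)) (half_pos hε)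
  have hab' : (a : k) ^ 2 - (b : k) ^ 2 ≠ 0 := sub_ne_zero.2 hab
  -- `c` is chosen so that `(a² - b²) c = d`.
  set c : k := d / ((a : k) ^ 2 - (b : k) ^ 2) with hc
  have hd : d = (a : k) ^ 2 * c + -((b : k) ^ 2 * c) := by
    rw [hc]; field_simp; ring
  have h := norm_unitary_conj_sub_le (π (slTorus hij a)) (π (slTorus hij b))
    (π (SpecialLinearGroup.transvection hij c))
  rw [← map_inv, ← map_inv, ← map_mul, ← map_mul, ← map_mul, ← map_mul, ← map_inv, ← map_mul,
    slTorus_conj_transvection, slTorus_conj_transvection, SpecialLinearGroup.transvection_inv,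
    ← SpecialLinearGroup.transvection_add, ← hd] at h
  rw [OneMemClass.coe_one]
  linarith

end SL

theorem no_nontrivial_finite_dim_unitary_rep_of_SL
    (m : ℕ) (hm : 2 ≤ m) (k : Type*) [Field k] [Infinite k]
    (n : ℕ) (hn : 1 ≤ n)
    (π : Matrix.SpecialLinearGroup (Fin m) k →* Matrix.unitaryGroup (Fin n) ℂ) :
    ∀ g : Matrix.SpecialLinearGroup (Fin m) k, π g = 1 := by
  intro g
  have h := eq_top_of_transvection_mem π.ker
    (fun i j hij c ↦ π.mem_ker.2 (map_transvection_eq_one π hij c)) ⟨0, by omega⟩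
  exact π.mem_ker.1 (h ▸ Subgroup.mem_top g)
end
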